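/- arXiv:2110.06489 — 3 statements merged into one kernel-verified Lean document; each statement's English description precedes it below -/
import Mathlib

section
/- Let G = (V,E) be an infinite, connected, simple graph with maximum degree at most 3 and nonnegative Ricci curvature (κ(u,v) ≥ 0 for every edge {u,v}). Suppose G contains a two-sided infinite geodesic line, i.e. vertices (w_n)_{n∈ℤ} with w_n ∼ w_{n+1} for all n and d(w_m, w_n) = |m − n| for all m, n ∈ ℤ. Then G is isomorphic to the two-sided infinite path P_ℤ or to the infinite ladder P_ℤ □ K_2. -/
/-!
Let `b` be the Busemann function of the line and `u` any bi-infinite path along which `b` increases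
by one at each step. Nonnegative curvature makes `Δb` nonincreasing along `u`, and as degrees are at
most `3` its values there are `-1`, `0` and `1`, nonzero values being caused by a third neighbour of
`u k`, one level above or below `u k`. Where `Δb = -1`, testing the curvature against
`max b (c - d(·, z'))` shows that consecutive third neighbours are adjacent, so that they form the
second rail of a ladder. In particular a `u` with `Δb = -1` throughout lies in a full ladder, which
exhausts the graph because it is `3`-regular.

To find such a `u` when some vertex lies off the line, rise from that vertex until the line is hit.
The two neighbours of the hitting point one level below it force `Δb = -1` on the line from there
on. The same argument for the reversed line provides a rail `z` along the negative end of the line.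
If `Δb = 1` somewhere on the line, then `Δb = -1` on the negative end of `z`, and following `z` and
then rising forever gives `u`. Otherwise `Δb ≥ 1` off the line, in particular on `z`, which is only
possible if `Δb = -1` on the line itself.
-/

open SimpleGraph

variable {V : Type*}

/-- Combinatorial (unnormalized) graph Laplacian. -/
def lapl (G : SimpleGraph V) [G.LocallyFinite] (f : V → ℝ) (x : V) : ℝ :=
  ∑ y ∈ G.neighborFinset x, (f y - f x)

/-- Lin-Lu-Yau-Ollivier Ricci curvature (limit-free definition):
`κ(u,v) = inf { Δf(u) − Δf(v) : f 1-Lipschitz w.r.t. graph distance, f v − f u = 1 }`. -/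
noncomputable def ricci (G : SimpleGraph V) [G.LocallyFinite] (u v : V) : ℝ :=
  sInf { r : ℝ | ∃ f : V → ℝ,
    (∀ x y : V, |f x - f y| ≤ (G.dist x y : ℝ)) ∧ f v - f u = 1 ∧
    r = lapl G f u - lapl G f v }

/-- Nonnegative Ricci curvature on every edge. -/
def NonnegRicci (G : SimpleGraph V) [G.LocallyFinite] : Prop :=
  ∀ u v : V, G.Adj u v → 0 ≤ ricci G u v
/-- The two-sided infinite path `P_ℤ`: vertices `ℤ`, with `n ∼ n+1`. -/
def pathZ : SimpleGraph ℤ := SimpleGraph.fromRel (fun m n => n = m + 1)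

/-- The infinite ladder `P_ℤ □ K_2`. -/
def infiniteLadder : SimpleGraph (ℤ × Fin 2) :=
  pathZ.boxProd (⊤ : SimpleGraph (Fin 2))

section Isomorphism

variable {W : Type*} {G : SimpleGraph V} {H : SimpleGraph W}

theorem nonempty_iso_of_injective_hom [G.LocallyFinite] [H.LocallyFinite] [Nonempty W]
    (hconn : G.Connected) (φ : H →g G) (hφ : Function.Injective φ)
    (hdeg : ∀ x, G.degree (φ x) ≤ H.degree x) : Nonempty (G ≃g H) := by
  classical
  have himage (x : W) : (H.neighborFinset x).image φ = G.neighborFinset (φ x) := by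
    refine Finset.eq_of_subset_of_card_le (fun v hv => ?_) ?_
    · obtain ⟨y, hy, rfl⟩ := Finset.mem_image.1 hv
      exact (G.mem_neighborFinset _ _).2 (φ.map_adj ((H.mem_neighborFinset _ _).1 hy))
    · rw [Finset.card_image_of_injective _ hφ]
      exact hdeg x
  have hlift {x : W} {v : V} (h : G.Adj (φ x) v) : ∃ y, H.Adj x y ∧ φ y = v := by
    simpa [← himage] using (G.mem_neighborFinset _ _).2 h
  have hsurj : Function.Surjective φ := by
    intro v
    obtain ⟨x₀⟩ := ‹Nonempty W›
    induction (reachable_iff_reflTransGen _ _).1 (hconn.preconnected (φ x₀) v) with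
    | refl => exact ⟨x₀, rfl⟩
    | tail _ hadj ih =>
      obtain ⟨x, rfl⟩ := ih
      obtain ⟨y, -, hy⟩ := hlift hadj
      exact ⟨y, hy⟩
  refine ⟨(RelIso.mk (Equiv.ofBijective φ ⟨hφ, hsurj⟩) ⟨fun h => ?_, φ.map_adj⟩).symm⟩
  obtain ⟨y, hy, he⟩ := hlift h
  exact hφ he ▸ hy

theorem pathZ_adj {m n : ℤ} : pathZ.Adj m n ↔ n = m + 1 ∨ m = n + 1 := by
  simp only [pathZ, fromRel_adj]
  omega

instance : pathZ.LocallyFinite := fun n =>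
  Fintype.ofFinset {n - 1, n + 1} fun k => by
    simp only [Finset.mem_insert, Finset.mem_singleton, mem_neighborSet, pathZ_adj]
    omega

instance : infiniteLadder.LocallyFinite := fun x => boxProdFintypeNeighborSet x

theorem degree_pathZ (n : ℤ) : pathZ.degree n = 2 := by
  have : pathZ.neighborFinset n = {n - 1, n + 1} := by
    ext k
    simp only [mem_neighborFinset, Finset.mem_insert, Finset.mem_singleton, pathZ_adj]
    omega
  rw [degree, this, Finset.card_pair (by omega)]

theorem degree_infiniteLadder (x : ℤ × Fin 2) : infiniteLadder.degree x = 3 := by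
  have := degree_boxProd (G := pathZ) (H := (⊤ : SimpleGraph (Fin 2))) x
  rw [degree_pathZ, complete_graph_degree, Fintype.card_fin] at this
  exact this

theorem infiniteLadder_adj {j k : ℤ} {s t : Fin 2} :
    infiniteLadder.Adj (j, s) (k, t) ↔ pathZ.Adj j k ∧ s = t ∨ j = k ∧ s ≠ t := by
  simp [infiniteLadder, boxProd_adj, and_comm]

end Isomorphism

section Curvature

variable {G : SimpleGraph V}

/-- `f` is 1-Lipschitz for the graph distance. As the distance is symmetric, the one-sided
inequality is enough. -/
def GraphLipschitz (G : SimpleGraph V) (f : V → ℤ) : Prop :=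
  ∀ x y, f y ≤ f x + G.dist x y

/-- The integer-valued version of the combinatorial Laplacian `lapl`. -/
def intLapl (G : SimpleGraph V) [G.LocallyFinite] (f : V → ℤ) (x : V) : ℤ :=
  ∑ y ∈ G.neighborFinset x, (f y - f x)

theorem GraphLipschitz.le_add_one {f : V → ℤ} (hf : GraphLipschitz G f) {x y : V}
    (h : G.Adj x y) : f y ≤ f x + 1 := by
  simpa [dist_eq_one_iff_adj.2 h] using hf x y

theorem GraphLipschitz.max_sub_dist {f : V → ℤ} (hf : GraphLipschitz G f) (hconn : G.Connected)
    (c : ℤ) (z : V) : GraphLipschitz G fun x => max (f x) (c - G.dist x z) := by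
  intro x y
  have hxy := hf x y
  have htri := hconn.dist_triangle (u := x) (v := y) (w := z)
  simp only
  omega

variable [G.LocallyFinite]

theorem lapl_intCast (f : V → ℤ) (x : V) :
    lapl G (fun v => (f v : ℝ)) x = (intLapl G f x : ℝ) := by
  simp [lapl, intLapl]

theorem abs_lapl_le_degree {f : V → ℝ} (hf : ∀ x y : V, |f x - f y| ≤ (G.dist x y : ℝ)) (x : V) :
    |lapl G f x| ≤ G.degree x := by
  refine (Finset.abs_sum_le_sum_abs _ _).trans ?_
  refine (Finset.sum_le_card_nsmul _ _ 1 fun y hy => ?_).trans (by simp)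
  have hyx : G.Adj y x := ((G.mem_neighborFinset x y).1 hy).symm
  simpa [dist_eq_one_iff_adj.2 hyx] using hf y x

theorem ricci_le_lapl_sub_lapl {u v : V} {f : V → ℝ}
    (hf : ∀ x y : V, |f x - f y| ≤ (G.dist x y : ℝ)) (hfuv : f v - f u = 1) :
    ricci G u v ≤ lapl G f u - lapl G f v := by
  refine csInf_le ⟨-(G.degree u + G.degree v : ℝ), ?_⟩ ⟨f, hf, hfuv, rfl⟩
  rintro r ⟨g, hg, -, rfl⟩
  have hu := neg_le_of_abs_le (abs_lapl_le_degree hg u)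
  have hv := le_of_abs_le (abs_lapl_le_degree hg v)
  linarith

theorem NonnegRicci.intLapl_le (hric : NonnegRicci G) {f : V → ℤ} (hf : GraphLipschitz G f)
    {u v : V} (huv : G.Adj u v) (hfuv : f v = f u + 1) : intLapl G f v ≤ intLapl G f u := by
  have hlip (x y : V) : |(f x : ℝ) - f y| ≤ G.dist x y := by
    have hxy := hf x y
    have hyx := hf y x
    rw [G.dist_comm] at hyx
    have : |f x - f y| ≤ (G.dist x y : ℤ) := abs_le.2 ⟨by omega, by omega⟩
    exact_mod_cast this
  have := (hric u v huv).trans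
    (ricci_le_lapl_sub_lapl (f := fun x => (f x : ℝ)) hlip (by simp [hfuv]))
  rw [lapl_intCast, lapl_intCast, sub_nonneg] at this
  exact_mod_cast this

theorem neighborFinset_eq_triple [DecidableEq V] {x p q r : V} (hdeg : G.degree x ≤ 3)
    (hp : G.Adj x p) (hq : G.Adj x q) (hr : G.Adj x r) (hpq : p ≠ q) (hpr : p ≠ r) (hqr : q ≠ r) :
    G.neighborFinset x = {p, q, r} := by
  refine (Finset.eq_of_subset_of_card_le (fun y hy => ?_) ?_).symm
  · simp only [Finset.mem_insert, Finset.mem_singleton] at hy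
    rw [mem_neighborFinset]
    rcases hy with rfl | rfl | rfl <;> assumption
  · rwa [Finset.card_eq_three.2 ⟨p, q, r, hpq, hpr, hqr, rfl⟩]

theorem intLapl_eq_of_three_adj {x p q r : V} (hdeg : G.degree x ≤ 3)
    (hp : G.Adj x p) (hq : G.Adj x q) (hr : G.Adj x r) (hpq : p ≠ q) (hpr : p ≠ r) (hqr : q ≠ r)
    (f : V → ℤ) : intLapl G f x = f p + f q + f r - 3 * f x := by
  classical
  rw [intLapl, neighborFinset_eq_triple hdeg hp hq hr hpq hpr hqr,
    Finset.sum_insert (by simp [hpq, hpr]), Finset.sum_pair hqr]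
  ring

end Curvature

section RisingLine

/-- A bi-infinite path `u` along which `b` increases by one at every step. -/
structure IsRisingLine (G : SimpleGraph V) (b : V → ℤ) (u : ℤ → V) : Prop where
  adj : ∀ k, G.Adj (u k) (u (k + 1))
  rise : ∀ k, b (u (k + 1)) = b (u k) + 1

namespace IsRisingLine

variable {G : SimpleGraph V} {b : V → ℤ} {u : ℤ → V}

theorem adj_sub_one (h : IsRisingLine G b u) (k : ℤ) : G.Adj (u k) (u (k - 1)) := by
  simpa using (h.adj (k - 1)).symm

theorem apply_eq_add (h : IsRisingLine G b u) (j k : ℤ) : b (u j) = b (u k) + (j - k) := by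
  have hzero (n : ℤ) : b (u n) = b (u 0) + n := by
    induction n with
    | zero => simp
    | succ n ih => rw [h.rise, ih, add_assoc]
    | pred n ih =>
      have := h.rise (-(n : ℤ) - 1)
      rw [sub_add_cancel] at this
      omega
  rw [hzero j, hzero k]
  ring

theorem injective (h : IsRisingLine G b u) : Function.Injective u := fun j k hjk => by
  have := h.apply_eq_add j k
  rw [hjk] at this
  omega

theorem adj_iff (h : IsRisingLine G b u) (hb : GraphLipschitz G b) {j k : ℤ} :
    G.Adj (u j) (u k) ↔ pathZ.Adj j k := by
  rw [pathZ_adj]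
  constructor
  · intro hjk
    have hne : j ≠ k := fun he => hjk.ne (congrArg u he)
    have hle := hb.le_add_one hjk
    have hge := hb.le_add_one hjk.symm
    have := h.apply_eq_add j k
    omega
  · rintro (rfl | rfl)
    exacts [h.adj j, (h.adj k).symm]

theorem nonempty_iso_pathZ (h : IsRisingLine G b u) (hb : GraphLipschitz G b)
    (hu : Function.Surjective u) : Nonempty (G ≃g pathZ) :=
  ⟨(RelIso.mk (Equiv.ofBijective u ⟨h.injective, hu⟩) (h.adj_iff hb)).symm⟩

theorem exists_eqOn_Iic {v : ℤ → V} {N : ℤ} (hb : ∀ x, ∃ y, G.Adj x y ∧ b y = b x + 1)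
    (hv : ∀ k < N, G.Adj (v k) (v (k + 1)) ∧ b (v (k + 1)) = b (v k) + 1) :
    ∃ u, IsRisingLine G b u ∧ Set.EqOn u v (Set.Iic N) := by
  choose g hg using hb
  let u : ℤ → V := fun k => g^[(k - N).toNat] (v (min k N))
  have hu : Set.EqOn u v (Set.Iic N) := fun k hk => by
    simp only [u]
    rw [min_eq_left hk, Int.toNat_of_nonpos (sub_nonpos.2 hk), Function.iterate_zero_apply]
  have hstep (k : ℤ) : G.Adj (u k) (u (k + 1)) ∧ b (u (k + 1)) = b (u k) + 1 := by
    rcases lt_or_ge k N with hk | hk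
    · rw [hu hk.le, hu (show k + 1 ≤ N by omega)]
      exact hv k hk
    · have : u (k + 1) = g (u k) := by
        simp only [u]
        rw [show (k + 1 - N).toNat = (k - N).toNat + 1 by omega, min_eq_right hk,
          min_eq_right (by omega), Function.iterate_succ_apply']
      rw [this]
      exact hg (u k)
  exact ⟨u, ⟨fun k => (hstep k).1, fun k => (hstep k).2⟩, hu⟩

variable [G.LocallyFinite]

theorem eq_of_adj_of_notMem_range (h : IsRisingLine G b u) {k : ℤ} {y z : V}
    (hdeg : G.degree (u k) ≤ 3) (hy : G.Adj (u k) y) (hyu : y ∉ Set.range u)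
    (hz : G.Adj (u k) z) (hzu : z ∉ Set.range u) : y = z := by
  classical
  have hmem := (G.mem_neighborFinset _ _).2 hy
  rw [neighborFinset_eq_triple hdeg (h.adj_sub_one k) (h.adj k) hz (h.injective.ne (by omega))
    (fun he => hzu ⟨_, he⟩) (fun he => hzu ⟨_, he⟩), Finset.mem_insert, Finset.mem_insert,
    Finset.mem_singleton] at hmem
  rcases hmem with rfl | rfl | he
  exacts [(hyu ⟨_, rfl⟩).elim, (hyu ⟨_, rfl⟩).elim, he]

theorem intLapl_eq_of_adj (h : IsRisingLine G b u) {k : ℤ} {z : V} (hdeg : G.degree (u k) ≤ 3)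
    (hz : G.Adj (u k) z) (hzu : z ∉ Set.range u) (f : V → ℤ) :
    intLapl G f (u k) = f (u (k - 1)) + f (u (k + 1)) + f z - 3 * f (u k) :=
  intLapl_eq_of_three_adj hdeg (h.adj_sub_one k) (h.adj k) hz (h.injective.ne (by omega))
    (fun he => hzu ⟨_, he⟩) (fun he => hzu ⟨_, he⟩) f

theorem apply_eq_add_intLapl (h : IsRisingLine G b u) {k : ℤ} {z : V}
    (hdeg : G.degree (u k) ≤ 3) (hz : G.Adj (u k) z) (hzu : z ∉ Set.range u) :
    b z = b (u k) + intLapl G b (u k) := by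
  rw [h.intLapl_eq_of_adj hdeg hz hzu, h.apply_eq_add (k - 1) k, h.rise]
  ring

theorem exists_adj_notMem_range (h : IsRisingLine G b u) (hb : GraphLipschitz G b) {k : ℤ}
    (hk : intLapl G b (u k) ≠ 0) : ∃ z, G.Adj (u k) z ∧ z ∉ Set.range u := by
  classical
  by_contra! hrange
  refine hk ?_
  have : G.neighborFinset (u k) = {u (k - 1), u (k + 1)} := by
    ext y
    simp only [mem_neighborFinset, Finset.mem_insert, Finset.mem_singleton]
    constructor
    · intro hy
      obtain ⟨j, rfl⟩ := hrange y hy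
      rcases pathZ_adj.1 ((h.adj_iff hb).1 hy) with rfl | rfl
      exacts [.inr rfl, .inl (by rw [add_sub_cancel_right])]
    · rintro (rfl | rfl)
      exacts [h.adj_sub_one k, h.adj k]
  rw [intLapl, this, Finset.sum_pair (h.injective.ne (by omega)), h.apply_eq_add (k - 1) k, h.rise]
  ring

theorem intLapl_mem_Icc (h : IsRisingLine G b u) (hb : GraphLipschitz G b) {k : ℤ}
    (hdeg : G.degree (u k) ≤ 3) : intLapl G b (u k) ∈ Set.Icc (-1) 1 := by
  by_cases hk : intLapl G b (u k) = 0
  · simp [hk]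
  · obtain ⟨z, hz, hzu⟩ := h.exists_adj_notMem_range hb hk
    have hbz := h.apply_eq_add_intLapl hdeg hz hzu
    have hle := hb.le_add_one hz
    have hge := hb.le_add_one hz.symm
    exact ⟨by omega, by omega⟩

theorem antitone_intLapl (h : IsRisingLine G b u) (hb : GraphLipschitz G b)
    (hric : NonnegRicci G) : Antitone (intLapl G b ∘ u) :=
  antitone_int_of_succ_le fun k => hric.intLapl_le hb (h.adj k) (h.rise k)

theorem intLapl_eq_neg_one_of_le (h : IsRisingLine G b u) (hb : GraphLipschitz G b)
    (hric : NonnegRicci G) {j k : ℤ} (hdeg : G.degree (u k) ≤ 3) (hjk : j ≤ k)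
    (hj : intLapl G b (u j) = -1) : intLapl G b (u k) = -1 :=
  le_antisymm (hj ▸ h.antitone_intLapl hb hric hjk) (h.intLapl_mem_Icc hb hdeg).1

theorem add_le_add_four_of_graphLipschitz (h : IsRisingLine G b u) (hric : NonnegRicci G)
    {f : V → ℤ} (hf : GraphLipschitz G f) {k : ℤ} {z z' : V}
    (hdeg : G.degree (u k) ≤ 3) (hz : G.Adj (u k) z) (hzu : z ∉ Set.range u)
    (hdeg' : G.degree (u (k + 1)) ≤ 3) (hz' : G.Adj (u (k + 1)) z') (hzu' : z' ∉ Set.range u)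
    (hfu : f (u (k + 1)) = f (u k) + 1) :
    f (u (k + 1 + 1)) + f z' ≤ f (u (k - 1)) + f z + 4 := by
  have hle := hric.intLapl_le hf (h.adj k) hfu
  rw [h.intLapl_eq_of_adj hdeg hz hzu, h.intLapl_eq_of_adj hdeg' hz' hzu',
    add_sub_cancel_right] at hle
  omega

/-- If `z` and `z'` were not adjacent, `max b (b (u (k + 1)) - d(·, z'))` would violate the
curvature condition on the edge from `u k` to `u (k + 1)`. -/
theorem adj_of_intLapl_eq_neg_one (h : IsRisingLine G b u) (hb : GraphLipschitz G b)
    (hconn : G.Connected) (hric : NonnegRicci G) (hdeg : ∀ v, G.degree v ≤ 3) {k : ℤ} {z z' : V}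
    (hpred : intLapl G b (u (k - 1)) ≤ 0) (hk : intLapl G b (u k) = -1)
    (hz : G.Adj (u k) z) (hzu : z ∉ Set.range u)
    (hz' : G.Adj (u (k + 1)) z') (hzu' : z' ∉ Set.range u) : G.Adj z z' := by
  have hbz := h.apply_eq_add_intLapl (hdeg _) hz hzu
  have hbz' := h.apply_eq_add_intLapl (hdeg _) hz' hzu'
  have hk' := h.intLapl_eq_neg_one_of_le hb hric (hdeg (u (k + 1))) (by omega) hk
  have hprev := h.apply_eq_add (k - 1) k
  have hnext := h.rise k
  have hsucc := h.rise (k + 1)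
  have hne : z ≠ z' := fun he => by
    rw [he] at hbz
    omega
  have hnadj : ¬ G.Adj (u (k - 1)) z' := fun hadj => by
    have := h.apply_eq_add_intLapl (hdeg _) hadj hzu'
    omega
  by_contra hzz'
  have dist_z := hconn.one_lt_dist_of_ne_of_not_adj hne hzz'
  have dist_prev := hconn.one_lt_dist_of_ne_of_not_adj (fun he => hzu' ⟨_, he⟩) hnadj
  have dist_k := hconn.pos_dist_of_ne (u := u k) (v := z') fun he => hzu' ⟨_, he⟩
  have hf := h.add_le_add_four_of_graphLipschitz hric
    (hb.max_sub_dist hconn (b (u (k + 1))) z') (hdeg _) hz hzu (hdeg _) hz' hzu'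
    (by omega)
  simp only [SimpleGraph.dist_self] at hf
  omega

end IsRisingLine

end RisingLine

section Ladder

/-- The path `z` is, over the indices in `s`, the second rail of a ladder in `G` with first rail
`u`. The rail `u` itself is not required to be a path. -/
structure IsLadderOn (G : SimpleGraph V) (u z : ℤ → V) (s : Set ℤ) : Prop where
  rung : ∀ k ∈ s, G.Adj (u k) (z k)
  rail : ∀ k ∈ s, k + 1 ∈ s → G.Adj (z k) (z (k + 1))
  notMem_range : ∀ k ∈ s, z k ∉ Set.range u
  injOn : Set.InjOn z s

variable {G : SimpleGraph V} {b : V → ℤ} {u z : ℤ → V} {s : Set ℤ}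

theorem IsLadderOn.comp_neg {m : ℤ} (hz : IsLadderOn G u z (Set.Ici m)) :
    IsLadderOn G (fun k => u (-k)) (fun k => z (-k)) (Set.Iic (-m)) := by
  have hmem (k : ℤ) (hk : k ∈ Set.Iic (-m)) : -k ∈ Set.Ici m :=
    Set.mem_Ici.2 (le_neg_of_le_neg hk)
  refine ⟨fun k hk => hz.rung (-k) (hmem k hk), fun k hk hk' => ?_, fun k hk => ?_,
    fun j hj k hk hjk => neg_injective (hz.injOn (hmem j hj) (hmem k hk) hjk)⟩
  · have hsucc : -(k + 1) + 1 = -k := by ring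
    have := hz.rail (-(k + 1)) (hmem _ hk') (by simpa only [hsucc] using hmem k hk)
    rw [hsucc] at this
    exact this.symm
  · rintro ⟨j, hj⟩
    exact hz.notMem_range (-k) (hmem k hk) ⟨-j, hj⟩

variable [G.LocallyFinite]

theorem IsLadderOn.nonempty_iso_infiniteLadder (hz : IsLadderOn G u z Set.univ)
    (hconn : G.Connected) (hdeg : ∀ v, G.degree v ≤ 3) (hadj : ∀ k, G.Adj (u k) (u (k + 1)))
    (hu : Function.Injective u) : Nonempty (G ≃g infiniteLadder) := by
  have hrung (k : ℤ) : G.Adj (u k) (z k) := hz.rung k trivial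
  have hrail (k : ℤ) : G.Adj (z k) (z (k + 1)) := hz.rail k trivial trivial
  have hne (j k : ℤ) : u j ≠ z k := fun he => hz.notMem_range k trivial ⟨j, he⟩
  have hinj : Function.Injective z := Set.injOn_univ.1 hz.injOn
  let φ : infiniteLadder →g G :=
    { toFun := fun p => ![u, z] p.2 p.1
      map_rel' := by
        rintro ⟨j, s⟩ ⟨k, t⟩ h
        rw [infiniteLadder_adj, pathZ_adj] at h
        rcases h with ⟨rfl | rfl, rfl⟩ | ⟨rfl, hst⟩
        · fin_cases s
          exacts [hadj j, hrail j]
        · fin_cases s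
          exacts [(hadj k).symm, (hrail k).symm]
        · fin_cases s <;> fin_cases t
          exacts [(hst rfl).elim, hrung j, (hrung j).symm, (hst rfl).elim] }
  refine nonempty_iso_of_injective_hom hconn φ ?_ fun x => by
    rw [degree_infiniteLadder]
    exact hdeg _
  rintro ⟨j, s⟩ ⟨k, t⟩ he
  fin_cases s <;> fin_cases t
  exacts [congrArg (·, 0) (hu he), (hne _ _ he).elim, (hne _ _ he.symm).elim,
    congrArg (·, 1) (hinj he)]

namespace IsRisingLine

theorem exists_isLadderOn (h : IsRisingLine G b u) (hb : GraphLipschitz G b)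
    (hconn : G.Connected) (hric : NonnegRicci G) (hdeg : ∀ v, G.degree v ≤ 3)
    (hs : ∀ k ∈ s, intLapl G b (u k) = -1) (hpred : ∀ k ∈ s, intLapl G b (u (k - 1)) ≤ 0) :
    ∃ z, IsLadderOn G u z s := by
  have hex (k : ℤ) : ∃ z, k ∈ s → G.Adj (u k) z ∧ z ∉ Set.range u := by
    by_cases hk : k ∈ s
    · obtain ⟨z, hz⟩ := h.exists_adj_notMem_range hb (k := k) (by simp [hs k hk])
      exact ⟨z, fun _ => hz⟩
    · exact ⟨u k, fun hk' => (hk hk').elim⟩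
  choose z hz using hex
  have hbz (k : ℤ) (hk : k ∈ s) : b (z k) = b (u k) - 1 := by
    have := h.apply_eq_add_intLapl (hdeg _) (hz k hk).1 (hz k hk).2
    rwa [hs k hk] at this
  refine ⟨z, fun k hk => (hz k hk).1, fun k hk hk' => ?_, fun k hk => (hz k hk).2,
    fun j hj k hk hjk => ?_⟩
  · exact h.adj_of_intLapl_eq_neg_one hb hconn hric hdeg (hpred k hk) (hs k hk)
      (hz k hk).1 (hz k hk).2 (hz _ hk').1 (hz _ hk').2
  · have hj' := hbz j hj
    have hk' := hbz k hk
    rw [hjk] at hj'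
    have := h.apply_eq_add j k
    omega

theorem nonempty_iso_infiniteLadder (h : IsRisingLine G b u) (hb : GraphLipschitz G b)
    (hconn : G.Connected) (hric : NonnegRicci G) (hdeg : ∀ v, G.degree v ≤ 3)
    (hu : ∀ k, intLapl G b (u k) = -1) : Nonempty (G ≃g infiniteLadder) := by
  obtain ⟨z, hz⟩ := h.exists_isLadderOn (s := Set.univ) hb hconn hric hdeg (fun k _ => hu k)
    fun k _ => by simp [hu]
  exact hz.nonempty_iso_infiniteLadder hconn hdeg h.adj h.injective

theorem intLapl_rail (h : IsRisingLine G b u) (hz : IsLadderOn G u z s)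
    (hdeg : ∀ v, G.degree v ≤ 3) {k : ℤ} (hpred : k - 1 ∈ s) (hk : k ∈ s) (hsucc : k + 1 ∈ s) :
    intLapl G b (z k) =
      intLapl G b (u (k - 1)) + intLapl G b (u (k + 1)) - 3 * intLapl G b (u k) := by
  have hbz (j : ℤ) (hj : j ∈ s) : b (z j) = b (u j) + intLapl G b (u j) :=
    h.apply_eq_add_intLapl (hdeg _) (hz.rung j hj) (hz.notMem_range j hj)
  have hadj : G.Adj (z (k - 1)) (z k) := by
    simpa using hz.rail (k - 1) hpred (by simpa using hk)
  rw [intLapl_eq_of_three_adj (hdeg _) hadj.symm (hz.rail k hk hsucc) (hz.rung k hk).symm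
    (hz.injOn.ne hpred hsucc (by omega)) (fun he => hz.notMem_range _ hpred ⟨_, he.symm⟩)
    (fun he => hz.notMem_range _ hsucc ⟨_, he.symm⟩), hbz _ hpred, hbz _ hk, hbz _ hsucc,
    h.apply_eq_add (k - 1) k, h.rise]
  ring

end IsRisingLine

end Ladder

section Busemann

/-- A two-sided infinite geodesic, parametrised by arc length. -/
def IsGeodesicLine (G : SimpleGraph V) (w : ℤ → V) : Prop :=
  ∀ m n : ℤ, G.dist (w m) (w n) = (m - n).natAbs

/-- The Busemann function of the positive end of the line `w`, with the sign for which it increases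
along `w`. For a geodesic line in a connected graph the supremum is attained; in general it may be
the junk value `0` of an unbounded supremum. -/
noncomputable def busemann (G : SimpleGraph V) (w : ℤ → V) (x : V) : ℤ :=
  ⨆ n : ℤ, (n - G.dist x (w n) : ℤ)

namespace IsGeodesicLine

variable {G : SimpleGraph V} {w : ℤ → V}

theorem comp_neg (hw : IsGeodesicLine G w) : IsGeodesicLine G fun k => w (-k) := fun m n => by
  rw [hw]
  omega

theorem bddAbove_sub_dist (hw : IsGeodesicLine G w) (hconn : G.Connected) (x : V) :
    BddAbove (Set.range fun n : ℤ => (n - G.dist x (w n) : ℤ)) := by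
  refine ⟨G.dist x (w 0), ?_⟩
  rintro _ ⟨n, rfl⟩
  have htri := hconn.dist_triangle (u := w 0) (v := x) (w := w n)
  rw [hw, G.dist_comm (u := w 0)] at htri
  simp only
  omega

theorem sub_dist_le_busemann (hw : IsGeodesicLine G w) (hconn : G.Connected) (x : V) (n : ℤ) :
    n - G.dist x (w n) ≤ busemann G w x :=
  le_ciSup (hw.bddAbove_sub_dist hconn x) n

theorem exists_dist_eq_sub_busemann (hw : IsGeodesicLine G w) (hconn : G.Connected) (x : V) :
    ∃ n : ℤ, (G.dist x (w n) : ℤ) = n - busemann G w x := by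
  obtain ⟨n, hn⟩ := Int.csSup_mem (Set.range_nonempty _) (hw.bddAbove_sub_dist hconn x)
  have hn : n - (G.dist x (w n) : ℤ) = busemann G w x := hn
  exact ⟨n, by omega⟩

theorem graphLipschitz_busemann (hw : IsGeodesicLine G w) (hconn : G.Connected) :
    GraphLipschitz G (busemann G w) := by
  intro x y
  obtain ⟨n, hn⟩ := hw.exists_dist_eq_sub_busemann hconn y
  have hle := hw.sub_dist_le_busemann hconn x n
  have htri := hconn.dist_triangle (u := x) (v := y) (w := w n)
  omega

theorem busemann_apply (hw : IsGeodesicLine G w) (hconn : G.Connected) (k : ℤ) :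
    busemann G w (w k) = k := by
  obtain ⟨n, hn⟩ := hw.exists_dist_eq_sub_busemann hconn (w k)
  have hle := hw.sub_dist_le_busemann hconn (w k) k
  rw [hw] at hn hle
  omega

theorem isRisingLine_busemann (hw : IsGeodesicLine G w) (hconn : G.Connected) :
    IsRisingLine G (busemann G w) w where
  adj k := dist_eq_one_iff_adj.1 (by rw [hw]; omega)
  rise k := by rw [hw.busemann_apply hconn, hw.busemann_apply hconn]

/-- The first step of a geodesic from `x` to a point `w n` at which the supremum defining the
Busemann function is attained. -/
theorem exists_adj_dist_eq_sub_busemann (hw : IsGeodesicLine G w) (hconn : G.Connected) {x : V}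
    {n : ℤ} (hn : (G.dist x (w n) : ℤ) = n - busemann G w x) (hx : x ≠ w n) :
    ∃ y, G.Adj x y ∧ busemann G w y = busemann G w x + 1 ∧
      (G.dist y (w n) : ℤ) = n - busemann G w y := by
  obtain ⟨p, hp⟩ := hconn.exists_walk_length_eq_dist x (w n)
  cases p with
  | nil => exact (hx rfl).elim
  | @cons _ y _ hxy p =>
    have hdist := dist_le p
    have hle := (hw.graphLipschitz_busemann hconn).le_add_one hxy
    have hge := hw.sub_dist_le_busemann hconn y n
    rw [Walk.length_cons] at hp
    exact ⟨y, hxy, by omega, by omega⟩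

theorem exists_adj_busemann_eq_add_one (hw : IsGeodesicLine G w) (hconn : G.Connected) (x : V) :
    ∃ y, G.Adj x y ∧ busemann G w y = busemann G w x + 1 := by
  obtain ⟨n, hn⟩ := hw.exists_dist_eq_sub_busemann hconn x
  by_cases hx : x = w n
  · have hline := hw.isRisingLine_busemann hconn
    exact ⟨w (n + 1), hx ▸ hline.adj n, hx ▸ hline.rise n⟩
  · obtain ⟨y, hxy, hy, -⟩ := hw.exists_adj_dist_eq_sub_busemann hconn hn hx
    exact ⟨y, hxy, hy⟩

variable [G.LocallyFinite]

theorem exists_adj_notMem_range (hw : IsGeodesicLine G w) (hconn : G.Connected)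
    (hric : NonnegRicci G) {x : V} (hx : x ∉ Set.range w) :
    ∃ m y, y ∉ Set.range w ∧ G.Adj (w m) y ∧ busemann G w (w m) = busemann G w y + 1 ∧
      intLapl G (busemann G w) y ≤ intLapl G (busemann G w) x := by
  obtain ⟨n, hn⟩ := hw.exists_dist_eq_sub_busemann hconn x
  induction hd : G.dist x (w n) generalizing x with
  | zero => exact (hx ⟨n, (hconn.dist_eq_zero_iff.1 hd).symm⟩).elim
  | succ d ih =>
    obtain ⟨y, hxy, hby, hy⟩ :=
      hw.exists_adj_dist_eq_sub_busemann hconn hn fun he => hx ⟨n, he.symm⟩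
    by_cases hyw : y ∈ Set.range w
    · obtain ⟨m, rfl⟩ := hyw
      exact ⟨m, x, hx, hxy.symm, hby, le_rfl⟩
    · obtain ⟨m, v, hv, hadj, hbv, hle⟩ := ih hyw hy (by omega)
      exact ⟨m, v, hv, hadj, hbv,
        hle.trans (hric.intLapl_le (hw.graphLipschitz_busemann hconn) hxy hby)⟩

theorem exists_adj_notMem_range_intLapl_eq_neg_one (hw : IsGeodesicLine G w)
    (hconn : G.Connected) (hric : NonnegRicci G) (hdeg : ∀ v, G.degree v ≤ 3) {x : V}
    (hx : x ∉ Set.range w) :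
    ∃ m y, y ∉ Set.range w ∧ G.Adj (w m) y ∧ (∀ k ≥ m, intLapl G (busemann G w) (w k) = -1) ∧
      intLapl G (busemann G w) y ≤ intLapl G (busemann G w) x := by
  have hline := hw.isRisingLine_busemann hconn
  obtain ⟨m, y, hy, hadj, hby, hle⟩ := hw.exists_adj_notMem_range hconn hric hx
  have hm : intLapl G (busemann G w) (w m) = -1 := by
    have := hline.apply_eq_add_intLapl (hdeg _) hadj hy
    omega
  exact ⟨m, y, hy, hadj, fun k hk => hline.intLapl_eq_neg_one_of_le
    (hw.graphLipschitz_busemann hconn) hric (hdeg _) hk hm, hle⟩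

theorem exists_isLadderOn_Ici (hw : IsGeodesicLine G w) (hconn : G.Connected)
    (hric : NonnegRicci G) (hdeg : ∀ v, G.degree v ≤ 3) {x : V} (hx : x ∉ Set.range w) :
    ∃ m z, IsLadderOn G w z (Set.Ici m) := by
  obtain ⟨m, -, -, -, hm, -⟩ :=
    hw.exists_adj_notMem_range_intLapl_eq_neg_one hconn hric hdeg hx
  refine ⟨m + 1, (hw.isRisingLine_busemann hconn).exists_isLadderOn
    (hw.graphLipschitz_busemann hconn) hconn hric hdeg (fun k hk => ?_) fun k hk => ?_⟩ <;>
    rw [Set.mem_Ici] at hk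
  · exact hm k (by omega)
  · simp [hm (k - 1) (by omega)]

theorem exists_isLadderOn_Iic (hw : IsGeodesicLine G w) (hconn : G.Connected)
    (hric : NonnegRicci G) (hdeg : ∀ v, G.degree v ≤ 3) {x : V} (hx : x ∉ Set.range w) :
    ∃ N z, IsLadderOn G w z (Set.Iic N) := by
  have hx' : x ∉ Set.range fun k => w (-k) := by
    rintro ⟨k, rfl⟩
    exact hx ⟨-k, rfl⟩
  obtain ⟨m, z, hz⟩ := hw.comp_neg.exists_isLadderOn_Ici hconn hric hdeg hx'
  exact ⟨-m, fun k => z (-k), by simpa using hz.comp_neg⟩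

/-- The last vertex `y` before a rising path from `x` hits the line at `w m` is the start `t m` of a
rail `t`, and `y` has Laplacian at least that of its successor on the rail, which is `1`. -/
theorem one_le_intLapl_of_notMem_range (hw : IsGeodesicLine G w) (hconn : G.Connected)
    (hric : NonnegRicci G) (hdeg : ∀ v, G.degree v ≤ 3)
    (hnonpos : ∀ k, intLapl G (busemann G w) (w k) ≤ 0) {x : V} (hx : x ∉ Set.range w) :
    1 ≤ intLapl G (busemann G w) x := by
  have hb := hw.graphLipschitz_busemann hconn
  have hline := hw.isRisingLine_busemann hconn
  obtain ⟨m, y, hy, hadj, hm, hyx⟩ :=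
    hw.exists_adj_notMem_range_intLapl_eq_neg_one hconn hric hdeg hx
  obtain ⟨t, ht⟩ :=
    hline.exists_isLadderOn (s := Set.Ici m) hb hconn hric hdeg hm fun k _ => hnonpos _
  have mem₀ : m ∈ Set.Ici m := Set.self_mem_Ici
  have mem₁ : m + 1 ∈ Set.Ici m := Set.mem_Ici.2 (by omega)
  have mem₂ : m + 1 + 1 ∈ Set.Ici m := Set.mem_Ici.2 (by omega)
  have hyt : y = t m :=
    hline.eq_of_adj_of_notMem_range (hdeg _) hadj hy (ht.rung m mem₀) (ht.notMem_range m mem₀)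
  have hrise : busemann G w (t (m + 1)) = busemann G w (t m) + 1 := by
    rw [hline.apply_eq_add_intLapl (hdeg _) (ht.rung _ mem₁) (ht.notMem_range _ mem₁),
      hline.apply_eq_add_intLapl (hdeg _) (ht.rung m mem₀) (ht.notMem_range m mem₀),
      hline.rise, hm _ mem₀, hm _ mem₁]
    ring
  calc
    1 = intLapl G (busemann G w) (t (m + 1)) := by
      have := hline.intLapl_rail ht hdeg (k := m + 1) (by simp) mem₁ mem₂
      rw [add_sub_cancel_right, hm _ mem₀, hm _ mem₁, hm _ mem₂] at this
      rw [this]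
      norm_num
    _ ≤ intLapl G (busemann G w) y :=
      hyt ▸ hric.intLapl_le hb (ht.rail m mem₀ mem₁) hrise
    _ ≤ intLapl G (busemann G w) x := hyx

theorem exists_isRisingLine_of_one_le (hw : IsGeodesicLine G w) (hconn : G.Connected)
    (hric : NonnegRicci G) (hdeg : ∀ v, G.degree v ≤ 3) {z : ℤ → V} {N K : ℤ}
    (hz : IsLadderOn G w z (Set.Iic N)) (hK : 1 ≤ intLapl G (busemann G w) (w K)) :
    ∃ u, IsRisingLine G (busemann G w) u ∧ ∀ k, intLapl G (busemann G w) (u k) = -1 := by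
  have hb := hw.graphLipschitz_busemann hconn
  have hline := hw.isRisingLine_busemann hconn
  have hone (j : ℤ) (hj : j ≤ K) : intLapl G (busemann G w) (w j) = 1 :=
    le_antisymm (hline.intLapl_mem_Icc hb (hdeg _)).2 (hK.trans (hline.antitone_intLapl hb hric hj))
  have hbz (j : ℤ) (hj : j ≤ K) (hjN : j ≤ N) : busemann G w (z j) = j + 1 := by
    rw [hline.apply_eq_add_intLapl (hdeg _) (hz.rung j hjN) (hz.notMem_range j hjN), hone j hj,
      hw.busemann_apply hconn]
  obtain ⟨u, hu, huz⟩ := IsRisingLine.exists_eqOn_Iic (v := z) (N := min K N)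
    (hw.exists_adj_busemann_eq_add_one hconn) fun k hk =>
      ⟨hz.rail k (show k ≤ N by omega) (show k + 1 ≤ N by omega), by
        rw [hbz (k + 1) (by omega) (by omega), hbz k (by omega) (by omega)]⟩
  refine ⟨u, hu, fun k => ?_⟩
  let j := min k (min K N - 1)
  have hj : intLapl G (busemann G w) (u j) = -1 := by
    rw [huz (show j ≤ min K N by omega), hline.intLapl_rail hz hdeg (show j - 1 ≤ N by omega)
      (show j ≤ N by omega) (show j + 1 ≤ N by omega), hone (j - 1) (by omega),
      hone j (by omega), hone (j + 1) (by omega)]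
    norm_num
  exact hu.intLapl_eq_neg_one_of_le hb hric (hdeg _) (min_le_left k _) hj

theorem intLapl_eq_neg_one_of_nonpos (hw : IsGeodesicLine G w) (hconn : G.Connected)
    (hric : NonnegRicci G) (hdeg : ∀ v, G.degree v ≤ 3) {z : ℤ → V} {N : ℤ}
    (hz : IsLadderOn G w z (Set.Iic N)) (hnonpos : ∀ k, intLapl G (busemann G w) (w k) ≤ 0)
    (k : ℤ) : intLapl G (busemann G w) (w k) = -1 := by
  have hb := hw.graphLipschitz_busemann hconn
  have hline := hw.isRisingLine_busemann hconn
  let j := min k (N - 1)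
  have hj : intLapl G (busemann G w) (w j) = -1 := by
    have hjN : j ≤ N := by omega
    have hrail := hline.intLapl_rail hz hdeg (show j - 1 ≤ N by omega) hjN (show j + 1 ≤ N by omega)
    have hoff := hw.one_le_intLapl_of_notMem_range hconn hric hdeg hnonpos (hz.notMem_range j hjN)
    have hprev := hnonpos (j - 1)
    have hnext := hnonpos (j + 1)
    have hmem := hline.intLapl_mem_Icc hb (hdeg (w j))
    rw [Set.mem_Icc] at hmem
    omega
  exact hline.intLapl_eq_neg_one_of_le hb hric (hdeg _) (min_le_left k _) hj

end IsGeodesicLine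

end Busemann

/-- An infinite, connected simple graph with maximum degree at most 3 and
nonnegative Ricci curvature which contains a two-sided infinite geodesic line is isomorphic
to the two-sided infinite path `P_ℤ` or to the infinite ladder `P_ℤ □ K_2`. -/
theorem splitting_theorem (G : SimpleGraph V) [Infinite V] [G.LocallyFinite]
    (hconn : G.Connected) (hdeg : ∀ v : V, G.degree v ≤ 3) (hric : NonnegRicci G)
    (w : ℤ → V) (hadj : ∀ n : ℤ, G.Adj (w n) (w (n + 1)))
    (hgeo : ∀ m n : ℤ, G.dist (w m) (w n) = (m - n).natAbs) :
    Nonempty (G ≃g pathZ) ∨ Nonempty (G ≃g infiniteLadder) := by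
  have hw : IsGeodesicLine G w := hgeo
  have hb := hw.graphLipschitz_busemann hconn
  have hline := hw.isRisingLine_busemann hconn
  by_cases hsurj : Function.Surjective w
  · exact .inl (hline.nonempty_iso_pathZ hb hsurj)
  right
  obtain ⟨x, hx⟩ : ∃ x, x ∉ Set.range w := by simpa [Function.Surjective] using hsurj
  obtain ⟨N, z, hz⟩ := hw.exists_isLadderOn_Iic hconn hric hdeg hx
  obtain ⟨u, hu, hneg⟩ : ∃ u, IsRisingLine G (busemann G w) u ∧
      ∀ k, intLapl G (busemann G w) (u k) = -1 := by
    by_cases hone : ∃ k, 1 ≤ intLapl G (busemann G w) (w k)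
    · obtain ⟨k, hk⟩ := hone
      exact hw.exists_isRisingLine_of_one_le hconn hric hdeg hz hk
    · push Not at hone
      exact ⟨w, hline, hw.intLapl_eq_neg_one_of_nonpos hconn hric hdeg hz fun k =>
        Int.lt_add_one_iff.1 (hone k)⟩
  exact hu.nonempty_iso_infiniteLadder hb hconn hric hdeg hneg
end

section
/- Let G = (V,E) be a finite simple graph whose vertex set is partitioned as V = A ⊔ B ⊔ C_1 ⊔ C_2 with C_1 and C_2 nonempty, such that: (1) there is no edge between A and B and no edge between C_1 and C_2; (2) the induced subgraphs on C_1 and on C_2 are complete graphs; (3) the induced subgraphs G_A on A ∪ C_1 ∪ C_2 and G_B on B ∪ C_1 ∪ C_2 are connected. Then G contains a geodesic cycle C with |C| ≥ d_{G_A}(C_1, C_2) + d_{G_B}(C_1, C_2), where d_{G_A}(C_1, C_2) denotes the minimal length of a path in G_A joining a vertex of C_1 to a vertex of C_2, and similarly for d_{G_B}. -/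
open SimpleGraph

variable {V : Type*}

/-- A geodesic cycle of length `n` in `G`: an embedded cycle `c : ZMod n → V` such that the
distance in `G` between any two of its vertices equals their distance along the cycle. -/
def IsGeodesicCycle (G : SimpleGraph V) (n : ℕ) (c : ZMod n → V) : Prop :=
  Function.Injective c ∧ (∀ i : ZMod n, G.Adj (c i) (c (i + 1))) ∧
    ∀ i j : ZMod n, G.dist (c i) (c j) = min (i - j).val (j - i).val

/-- The distance, inside the subgraph of `G` induced on `S`, between the vertex sets
`C1` and `C2` (minimal length of a path in the induced subgraph joining them). -/
noncomputable def inducedSetDist (G : SimpleGraph V) (S C1 C2 : Set V) : ℕ :=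
  sInf { n : ℕ | ∃ x y : S, (x : V) ∈ C1 ∧ (y : V) ∈ C2 ∧ (G.induce S).dist x y = n }

/-!
Write `S = A ∪ C1 ∪ C2` and `T = B ∪ C1 ∪ C2`. Label every oriented edge by an integer so that the
labels are the differences of a potential which, from `C1` to `C2`, increases from `0` to
`d_S(C1, C2)` along `S` and decreases from `0` to `-d_T(C1, C2)` along `T`. The two potentials agree
on `S ∩ T` modulo `N = d_S(C1, C2) + d_T(C1, C2)`, so the labels along any closed walk sum to a
multiple of `N`, and going from `C1` to `C2` through `S` and back through `T` gives a non-zero sum.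
A shortest closed walk of non-zero sum has length at least `N`, since the labels lie in
`{-1, 0, 1}`. It is a geodesic cycle: a shortcut would split it into two shorter closed walks, one
of which still has non-zero sum.
-/

section DartSum

variable {M : Type*} {G : SimpleGraph V} {u v w : V}

/-- The sum along a walk of a function on the oriented edges of `G`, that is, the integral of a
`1`-cochain. `M` need not be commutative, so terms are added in the order of the walk. -/
def dartSum [AddMonoid M] (φ : G.Dart → M) (p : G.Walk u v) : M :=
  (p.darts.map φ).sum

@[simp]
theorem dartSum_nil [AddMonoid M] (φ : G.Dart → M) : dartSum φ (Walk.nil : G.Walk u u) = 0 :=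
  rfl

@[simp]
theorem dartSum_cons [AddMonoid M] (φ : G.Dart → M) (h : G.Adj u v) (p : G.Walk v w) :
    dartSum φ (p.cons h) = φ ⟨(u, v), h⟩ + dartSum φ p := by
  simp [dartSum]

@[simp]
theorem dartSum_append [AddMonoid M] (φ : G.Dart → M) (p : G.Walk u v) (q : G.Walk v w) :
    dartSum φ (p.append q) = dartSum φ p + dartSum φ q := by
  simp [dartSum]

theorem dartSum_reverse [AddGroup M] {φ : G.Dart → M} (hφ : ∀ d, φ d.symm = -φ d)
    (p : G.Walk u v) : dartSum φ p.reverse = -dartSum φ p := by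
  simp [dartSum, List.sum_neg_reverse, Function.comp_def, hφ]

theorem map_dartSum {N : Type*} [AddMonoid M] [AddMonoid N] (F : M →+ N) (φ : G.Dart → M)
    (p : G.Walk u v) : F (dartSum φ p) = dartSum (F ∘ φ) p := by
  simp [dartSum, map_list_sum]

theorem abs_dartSum_le_length_nsmul [AddCommGroup M] [LinearOrder M] [IsOrderedAddMonoid M]
    {φ : G.Dart → M} {c : M} (hφ : ∀ d, |φ d| ≤ c) (p : G.Walk u v) :
    |dartSum φ p| ≤ p.length • c := by
  induction p with
  | nil => simp
  | cons h p ih =>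
    rw [dartSum_cons, Walk.length_cons, succ_nsmul']
    exact (abs_add_le _ _).trans (add_le_add (hφ _) ih)

end DartSum

section Systole

variable {M : Type*} {G : SimpleGraph V} {u v x : V}

/-- A shortest closed walk among those with non-zero sum, at any base point: the analogue of a
systolic loop, with `φ` detecting which closed walks are essential. -/
def IsSystole [AddMonoid M] (φ : G.Dart → M) (p : G.Walk x x) : Prop :=
  dartSum φ p ≠ 0 ∧ ∀ (y : V) (q : G.Walk y y), dartSum φ q ≠ 0 → p.length ≤ q.length

theorem exists_isSystole [AddMonoid M] {φ : G.Dart → M} {p : G.Walk x x} (hp : dartSum φ p ≠ 0) :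
    ∃ (y : V) (q : G.Walk y y), IsSystole φ q := by
  classical
  have hex : ∃ (n : ℕ) (y : V) (q : G.Walk y y), dartSum φ q ≠ 0 ∧ q.length = n :=
    ⟨_, x, p, hp, rfl⟩
  obtain ⟨y, q, hq, hlength⟩ := Nat.find_spec hex
  exact ⟨y, q, hq, fun z r hr ↦ hlength.trans_le (Nat.find_min' hex ⟨z, r, hr, rfl⟩)⟩

namespace IsSystole

theorem length_pos [AddMonoid M] {φ : G.Dart → M} {p : G.Walk x x} (hp : IsSystole φ p) :
    0 < p.length := by
  cases p with
  | nil => exact absurd (dartSum_nil φ) hp.1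
  | cons h p => simp

theorem append_comm [AddGroup M] {φ : G.Dart → M} {p : G.Walk u v} {q : G.Walk v u}
    (h : IsSystole φ (p.append q)) : IsSystole φ (q.append p) := by
  refine ⟨?_, fun y r hr ↦ ?_⟩
  · rw [dartSum_append, Ne, add_eq_zero_comm, ← dartSum_append]
    exact h.1
  · rw [Walk.length_append, add_comm, ← Walk.length_append]
    exact h.2 y r hr

theorem dist_eq_min [AddGroup M] {φ : G.Dart → M} (hφ : ∀ d, φ d.symm = -φ d)
    {p : G.Walk u v} {q : G.Walk v u} (h : IsSystole φ (p.append q)) :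
    G.dist u v = min p.length q.length := by
  apply le_antisymm
  · exact le_min (dist_le p) (dist_comm.trans_le (dist_le q))
  obtain ⟨r, hr⟩ := p.reachable.exists_walk_length_eq_dist
  rw [← hr]
  by_cases hpr : dartSum φ p = dartSum φ r
  · have hrq : dartSum φ (r.append q) ≠ 0 := by
      rw [dartSum_append, ← hpr, ← dartSum_append]
      exact h.1
    have := h.2 u _ hrq
    simp only [Walk.length_append] at this
    omega
  · have hpr' : dartSum φ (p.append r.reverse) ≠ 0 := by
      rwa [dartSum_append, dartSum_reverse hφ, ← sub_eq_add_neg, sub_ne_zero]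
    have := h.2 u _ hpr'
    simp only [Walk.length_append, Walk.length_reverse] at this
    omega

theorem dist_getVert [AddGroup M] {φ : G.Dart → M} (hφ : ∀ d, φ d.symm = -φ d)
    {p : G.Walk x x} (hp : IsSystole φ p) {i k : ℕ} (hik : i + k ≤ p.length) :
    G.dist (p.getVert i) (p.getVert (i + k)) = min k (p.length - k) := by
  rw [← p.append_take_drop_eq i] at hp
  have hrotate := hp.append_comm
  rw [← (p.drop i).append_take_drop_eq k, ← Walk.append_assoc] at hrotate
  have hdist := hrotate.dist_eq_min hφ
  simp only [Walk.drop_getVert, Walk.length_append, Walk.take_length, Walk.drop_length] at hdist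
  rw [hdist]
  omega

end IsSystole

theorem adj_getVert_val_add_one {p : G.Walk x x} [NeZero p.length] (i : ZMod p.length) :
    G.Adj (p.getVert i.val) (p.getVert (i + 1).val) := by
  have hadj := p.adj_getVert_succ i.val_lt
  have hval : (i + 1).val = (i.val + 1) % p.length := by
    rw [← ZMod.val_natCast]
    simp
  rcases (Nat.succ_le_of_lt i.val_lt).lt_or_eq with hlt | heq
  · rwa [hval, Nat.mod_eq_of_lt hlt]
  · rw [Nat.succ_eq_add_one] at heq
    rw [heq, Walk.getVert_length] at hadj
    rwa [hval, heq, Nat.mod_self, Walk.getVert_zero]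

theorem isGeodesicCycle_getVert {p : G.Walk x x} (hp : 0 < p.length)
    (hdist : ∀ i k, i + k < p.length →
      G.dist (p.getVert i) (p.getVert (i + k)) = min k (p.length - k)) :
    IsGeodesicCycle G p.length (fun i ↦ p.getVert i.val) := by
  have : NeZero p.length := ⟨hp.ne'⟩
  have hcycle (i j : ZMod p.length) :
      G.dist (p.getVert i.val) (p.getVert j.val) = min (i - j).val (j - i).val := by
    wlog hij : i.val ≤ j.val generalizing i j
    · rw [dist_comm, this j i (le_of_not_ge hij), min_comm]
    have h := hdist i.val (j.val - i.val) (by have := j.val_lt; omega)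
    rw [Nat.add_sub_cancel' hij, ← ZMod.val_sub hij] at h
    rw [h, ← neg_sub j i, ZMod.neg_val, min_comm]
    split_ifs with hzero <;> simp [hzero]
  refine ⟨fun i j hij ↦ ?_, adj_getVert_val_add_one, hcycle⟩
  have hmin : min (i - j).val (j - i).val = 0 := by
    rw [← hcycle, show p.getVert i.val = p.getVert j.val from hij, dist_self]
  rcases Nat.min_eq_zero_iff.mp hmin with h | h <;> rw [ZMod.val_eq_zero, sub_eq_zero] at h
  exacts [h, h.symm]

theorem IsSystole.isGeodesicCycle [AddGroup M] {φ : G.Dart → M} (hφ : ∀ d, φ d.symm = -φ d)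
    {p : G.Walk x x} (hp : IsSystole φ p) :
    IsGeodesicCycle G p.length (fun i ↦ p.getVert i.val) :=
  isGeodesicCycle_getVert hp.length_pos fun _ _ hik ↦ hp.dist_getVert hφ hik.le

end Systole

theorem exists_walk_support_subset_of_preconnected_induce {G : SimpleGraph V} {S : Set V} {u v : V}
    (hS : (G.induce S).Preconnected) (hu : u ∈ S) (hv : v ∈ S) :
    ∃ p : G.Walk u v, ∀ w ∈ p.support, w ∈ S := by
  obtain ⟨p⟩ := hS ⟨u, hu⟩ ⟨v, hv⟩
  have hp : ∀ w ∈ (p.map (Embedding.induce S).toHom).support, w ∈ S := by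
    rw [Walk.support_map, List.forall_mem_map]
    exact fun w _ ↦ w.2
  exact ⟨_, hp⟩

section Potential

variable {M : Type*} [AddCommGroup M] {G : SimpleGraph V} {S T : Set V} {f g : V → M}
  {φ : G.Dart → M} {u v x y : V}

/-- `f` is a potential for `φ` on the subgraph of `G` induced on `S`: there `φ` is the
coboundary of `f`. -/
def IsPotentialOn (φ : G.Dart → M) (f : V → M) (S : Set V) : Prop :=
  ∀ d : G.Dart, d.fst ∈ S → d.snd ∈ S → φ d = f d.snd - f d.fst

namespace IsPotentialOn

theorem map {N : Type*} [AddCommGroup N] (F : M →+ N) (h : IsPotentialOn φ f S) :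
    IsPotentialOn (F ∘ φ) (F ∘ f) S := fun d hu hv ↦ by
  simp [h d hu hv]

theorem dartSum_eq (h : IsPotentialOn φ f S) {p : G.Walk u v} (hp : ∀ w ∈ p.support, w ∈ S) :
    dartSum φ p = f v - f u := by
  induction p with
  | nil => simp
  | cons e p ih =>
    simp only [Walk.support_cons, List.forall_mem_cons] at hp
    rw [dartSum_cons, ih hp.2, h ⟨_, e⟩ hp.1 (hp.2 _ p.start_mem_support)]
    exact (add_comm _ _).trans (sub_add_sub_cancel _ _ _)

theorem dartSum_eq_zero (hf : IsPotentialOn φ f S) (hg : IsPotentialOn φ g T)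
    (hST : ∀ ⦃u v⦄, G.Adj u v → u ∈ S ∧ v ∈ S ∨ u ∈ T ∧ v ∈ T) (hfg : Set.EqOn f g (S ∩ T))
    (p : G.Walk x x) : dartSum φ p = 0 := by
  classical
  have hglue : Set.EqOn (S.piecewise f g) g T := fun v hv ↦ by
    by_cases hvS : v ∈ S
    · rw [Set.piecewise_eq_of_mem _ _ _ hvS, hfg ⟨hvS, hv⟩]
    · exact Set.piecewise_eq_of_notMem _ _ _ hvS
  have h : IsPotentialOn φ (S.piecewise f g) Set.univ := by
    rintro d - -
    rcases hST d.adj with ⟨hu, hv⟩ | ⟨hu, hv⟩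
    · rw [hf d hu hv, Set.piecewise_eq_of_mem _ _ _ hu, Set.piecewise_eq_of_mem _ _ _ hv]
    · rw [hg d hu hv, hglue hu, hglue hv]
  rw [h.dartSum_eq fun w _ ↦ Set.mem_univ w, sub_self]

theorem exists_dartSum_ne_zero (hf : IsPotentialOn φ f S) (hg : IsPotentialOn φ g T)
    (hS : (G.induce S).Preconnected) (hT : (G.induce T).Preconnected)
    (hx : x ∈ S ∩ T) (hy : y ∈ S ∩ T) (hxy : f y - f x ≠ g y - g x) :
    ∃ p : G.Walk x x, dartSum φ p ≠ 0 := by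
  obtain ⟨p, hp⟩ := exists_walk_support_subset_of_preconnected_induce hS hx.1 hy.1
  obtain ⟨q, hq⟩ := exists_walk_support_subset_of_preconnected_induce hT hy.2 hx.2
  refine ⟨p.append q, ?_⟩
  rwa [dartSum_append, hf.dartSum_eq hp, hg.dartSum_eq hq, ← neg_sub (g y), ← sub_eq_add_neg,
    sub_ne_zero]

end IsPotentialOn

open Classical in
/-- The coboundary of `f` on the edges inside `S` and of `g` on all other edges. -/
noncomputable def gluedCoboundary (S : Set V) (f g : V → M) (d : G.Dart) : M :=
  if d.fst ∈ S ∧ d.snd ∈ S then f d.snd - f d.fst else g d.snd - g d.fst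

theorem gluedCoboundary_symm (S : Set V) (f g : V → M) (d : G.Dart) :
    gluedCoboundary S f g d.symm = -gluedCoboundary S f g d := by
  have hsymm : d.symm.fst ∈ S ∧ d.symm.snd ∈ S ↔ d.fst ∈ S ∧ d.snd ∈ S := and_comm
  rw [gluedCoboundary, gluedCoboundary]
  by_cases h : d.fst ∈ S ∧ d.snd ∈ S
  · rw [if_pos h, if_pos (hsymm.mpr h)]
    exact (neg_sub _ _).symm
  · rw [if_neg h, if_neg (mt hsymm.mp h)]
    exact (neg_sub _ _).symm

theorem isPotentialOn_gluedCoboundary_left (S : Set V) (f g : V → M) :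
    IsPotentialOn (G := G) (gluedCoboundary S f g) f S :=
  fun _ hu hv ↦ if_pos ⟨hu, hv⟩

theorem isPotentialOn_gluedCoboundary_right
    (hfg : ∀ u ∈ S ∩ T, ∀ v ∈ S ∩ T, G.Adj u v → f v - f u = g v - g u) :
    IsPotentialOn (G := G) (gluedCoboundary S f g) g T := fun d hu hv ↦ by
  rw [gluedCoboundary]
  split_ifs with h
  · exact hfg _ ⟨h.1, hu⟩ _ ⟨h.2, hv⟩ d.adj
  · rfl

end Potential

theorem exists_isGeodesicCycle_of_potentials {G : SimpleGraph V} {S T : Set V} {f g : V → ℤ}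
    {N : ℕ} {x y : V} (hST : ∀ ⦃u v⦄, G.Adj u v → u ∈ S ∧ v ∈ S ∨ u ∈ T ∧ v ∈ T)
    (hS : (G.induce S).Preconnected) (hT : (G.induce T).Preconnected)
    (hf : ∀ u ∈ S, ∀ v ∈ S, G.Adj u v → |f v - f u| ≤ 1)
    (hg : ∀ u ∈ T, ∀ v ∈ T, G.Adj u v → |g v - g u| ≤ 1)
    (hfg : ∀ u ∈ S ∩ T, ∀ v ∈ S ∩ T, G.Adj u v → f v - f u = g v - g u)
    (hmod : ∀ v ∈ S ∩ T, (f v : ZMod N) = g v)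
    (hx : x ∈ S ∩ T) (hy : y ∈ S ∩ T) (hxy : f y - f x ≠ g y - g x) :
    ∃ (n : ℕ) (c : ZMod n → V), IsGeodesicCycle G n c ∧ N ≤ n := by
  let φ : G.Dart → ℤ := gluedCoboundary S f g
  have hφf : IsPotentialOn φ f S := isPotentialOn_gluedCoboundary_left S f g
  have hφg : IsPotentialOn φ g T := isPotentialOn_gluedCoboundary_right hfg
  have hφ_le (d : G.Dart) : |φ d| ≤ 1 := by
    rcases hST d.adj with ⟨hu, hv⟩ | ⟨hu, hv⟩
    · exact hφf d hu hv ▸ hf _ hu _ hv d.adj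
    · exact hφg d hu hv ▸ hg _ hu _ hv d.adj
  obtain ⟨q, hq⟩ := hφf.exists_dartSum_ne_zero hφg hS hT hx hy hxy
  obtain ⟨z, p, hp⟩ := exists_isSystole hq
  refine ⟨p.length, _, hp.isGeodesicCycle (gluedCoboundary_symm S f g), ?_⟩
  have hdvd : (N : ℤ) ∣ dartSum φ p := by
    let F : ℤ →+ ZMod N := Int.castAddHom (ZMod N)
    rw [← ZMod.intCast_zmod_eq_zero_iff_dvd]
    exact (map_dartSum F φ p).trans ((hφf.map F).dartSum_eq_zero (hφg.map F) hST hmod p)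
  have hN : (N : ℤ) ≤ |dartSum φ p| := Int.le_of_dvd (abs_pos.mpr hp.1) ((dvd_abs _ _).mpr hdvd)
  have hlength : |dartSum φ p| ≤ p.length := by simpa using abs_dartSum_le_length_nsmul hφ_le p
  exact_mod_cast hN.trans hlength

theorem exists_isGeodesicCycle_of_boundary_values {G : SimpleGraph V} {S T C1 C2 : Set V}
    {f g : V → ℤ} {a b : ℕ} (hC1 : C1.Nonempty) (hC2 : C2.Nonempty) (hinter : S ∩ T = C1 ∪ C2)
    (hST : ∀ ⦃u v⦄, G.Adj u v → u ∈ S ∧ v ∈ S ∨ u ∈ T ∧ v ∈ T)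
    (hEC : ∀ x ∈ C1, ∀ y ∈ C2, ¬ G.Adj x y)
    (hS : (G.induce S).Preconnected) (hT : (G.induce T).Preconnected)
    (hf : ∀ u ∈ S, ∀ v ∈ S, G.Adj u v → |f v - f u| ≤ 1)
    (hg : ∀ u ∈ T, ∀ v ∈ T, G.Adj u v → |g v - g u| ≤ 1)
    (hf1 : ∀ v ∈ C1, f v = 0) (hg1 : ∀ v ∈ C1, g v = 0)
    (hf2 : ∀ v ∈ C2, f v = a) (hg2 : ∀ v ∈ C2, g v = b) (hab : 0 < a + b) :
    ∃ (n : ℕ) (c : ZMod n → V), IsGeodesicCycle G n c ∧ a + b ≤ n := by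
  obtain ⟨x, hx⟩ := hC1
  obtain ⟨y, hy⟩ := hC2
  have hg_neg : ∀ u ∈ T, ∀ v ∈ T, G.Adj u v → |-g v - -g u| ≤ 1 := fun u hu v hv huv ↦ by
    rw [neg_sub_neg]
    exact hg v hv u hu huv.symm
  have hfg : ∀ u ∈ S ∩ T, ∀ v ∈ S ∩ T, G.Adj u v → f v - f u = -g v - -g u := by
    intro u hu v hv huv
    rcases hinter.subset hu with hu | hu <;> rcases hinter.subset hv with hv | hv
    · simp [hf1 u hu, hf1 v hv, hg1 u hu, hg1 v hv]
    · exact absurd huv (hEC u hu v hv)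
    · exact absurd huv.symm (hEC v hv u hu)
    · simp [hf2 u hu, hf2 v hv, hg2 u hu, hg2 v hv]
  have hmod : ∀ v ∈ S ∩ T, (f v : ZMod (a + b)) = (-g v : ℤ) := by
    intro v hv
    rcases hinter.subset hv with hv | hv
    · simp [hf1 v hv, hg1 v hv]
    · rw [hf2 v hv, hg2 v hv, ZMod.intCast_eq_intCast_iff_dvd_sub]
      exact ⟨-1, by push_cast; ring⟩
  have hxy : f y - f x ≠ -g y - -g x := by
    rw [hf1 x hx, hf2 y hy, hg1 x hx, hg2 y hy]
    omega
  exact exists_isGeodesicCycle_of_potentials hST hS hT hf hg_neg hfg hmod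
    (hinter.superset (Or.inl hx)) (hinter.superset (Or.inr hy)) hxy

section InducedSetDist

variable {G : SimpleGraph V} {S C1 C2 : Set V} {u v : V}

theorem inducedSetDist_le {x y : S} (hx : (x : V) ∈ C1) (hy : (y : V) ∈ C2) :
    inducedSetDist G S C1 C2 ≤ (G.induce S).dist x y :=
  Nat.sInf_le ⟨x, y, hx, hy, rfl⟩

theorem exists_dist_eq_inducedSetDist (hC1 : (S ∩ C1).Nonempty) (hC2 : (S ∩ C2).Nonempty) :
    ∃ x y : S, (x : V) ∈ C1 ∧ (y : V) ∈ C2 ∧ (G.induce S).dist x y = inducedSetDist G S C1 C2 := by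
  obtain ⟨x, hxS, hx⟩ := hC1
  obtain ⟨y, hyS, hy⟩ := hC2
  exact Nat.sInf_mem (s := {n : ℕ | ∃ x y : S, (x : V) ∈ C1 ∧ (y : V) ∈ C2 ∧
    (G.induce S).dist x y = n}) ⟨_, ⟨x, hxS⟩, ⟨y, hyS⟩, hx, hy, rfl⟩

theorem inducedSetDist_pos (hS : (G.induce S).Connected) (hC1 : (S ∩ C1).Nonempty)
    (hC2 : (S ∩ C2).Nonempty) (hC12 : Disjoint C1 C2) : 0 < inducedSetDist G S C1 C2 := by
  obtain ⟨x, y, hx, hy, hxy⟩ := exists_dist_eq_inducedSetDist (G := G) hC1 hC2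
  rw [← hxy]
  exact hS.pos_dist_of_ne fun h ↦ hC12.ne_of_mem hx hy (congrArg Subtype.val h)

theorem inducedSetDist_singleton_le_add_one (hS : (G.induce S).Connected)
    (hC1 : (S ∩ C1).Nonempty) (hu : u ∈ S) (hv : v ∈ S) (huv : G.Adj u v) :
    inducedSetDist G S C1 {v} ≤ inducedSetDist G S C1 {u} + 1 := by
  obtain ⟨x, y, hx, hy, hxy⟩ :=
    exists_dist_eq_inducedSetDist (G := G) hC1 (C2 := {u}) ⟨u, hu, rfl⟩
  obtain rfl : y = ⟨u, hu⟩ := Subtype.ext hy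
  calc inducedSetDist G S C1 {v} ≤ (G.induce S).dist x ⟨v, hv⟩ := inducedSetDist_le hx rfl
    _ ≤ (G.induce S).dist x ⟨u, hu⟩ + (G.induce S).dist ⟨u, hu⟩ ⟨v, hv⟩ := hS.dist_triangle
    _ = inducedSetDist G S C1 {u} + 1 := by
      rw [hxy, dist_eq_one_iff_adj.mpr (induce_adj.mpr huv)]

theorem inducedSetDist_le_singleton (hC1 : (S ∩ C1).Nonempty) (hv : v ∈ S ∩ C2) :
    inducedSetDist G S C1 C2 ≤ inducedSetDist G S C1 {v} := by
  obtain ⟨x, y, hx, hy, hxy⟩ :=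
    exists_dist_eq_inducedSetDist (G := G) hC1 (C2 := {v}) ⟨v, hv.1, rfl⟩
  exact hxy ▸ inducedSetDist_le hx (Set.mem_singleton_iff.mp hy ▸ hv.2)

/-- The distance to `C1` inside the subgraph induced on `S`, cut off at the distance from `C1` to
`C2`. The cutoff makes it constant on `C2` as well as on `C1`. -/
noncomputable def truncatedDist (G : SimpleGraph V) (S C1 C2 : Set V) (v : V) : ℕ :=
  min (inducedSetDist G S C1 {v}) (inducedSetDist G S C1 C2)

theorem truncatedDist_of_mem_left (hv : v ∈ S ∩ C1) : truncatedDist G S C1 C2 v = 0 := by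
  have hself := inducedSetDist_le (G := G) (x := ⟨v, hv.1⟩) (y := ⟨v, hv.1⟩) hv.2
    (Set.mem_singleton v)
  rw [dist_self, Nat.le_zero] at hself
  rw [truncatedDist, hself, Nat.zero_min]

theorem truncatedDist_of_mem_right (hC1 : (S ∩ C1).Nonempty) (hv : v ∈ S ∩ C2) :
    truncatedDist G S C1 C2 v = inducedSetDist G S C1 C2 :=
  min_eq_right (inducedSetDist_le_singleton hC1 hv)

theorem abs_truncatedDist_sub_le_one (hS : (G.induce S).Connected) (hC1 : (S ∩ C1).Nonempty)
    (hu : u ∈ S) (hv : v ∈ S) (huv : G.Adj u v) :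
    |(truncatedDist G S C1 C2 v : ℤ) - truncatedDist G S C1 C2 u| ≤ 1 := by
  have hv_le := inducedSetDist_singleton_le_add_one hS hC1 hu hv huv
  have hu_le := inducedSetDist_singleton_le_add_one hS hC1 hv hu huv.symm
  rw [abs_le, truncatedDist, truncatedDist]
  omega

end InducedSetDist

theorem geodesic_cycle_of_partition_general (G : SimpleGraph V) {S T C1 C2 : Set V}
    (hC1 : C1.Nonempty) (hC2 : C2.Nonempty) (hC12 : Disjoint C1 C2) (hinter : S ∩ T = C1 ∪ C2)
    (hST : ∀ ⦃u v⦄, G.Adj u v → u ∈ S ∧ v ∈ S ∨ u ∈ T ∧ v ∈ T)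
    (hEC : ∀ x ∈ C1, ∀ y ∈ C2, ¬ G.Adj x y)
    (hS : (G.induce S).Connected) (hT : (G.induce T).Connected) :
    ∃ (n : ℕ) (c : ZMod n → V), IsGeodesicCycle G n c ∧
      inducedSetDist G S C1 C2 + inducedSetDist G T C1 C2 ≤ n := by
  have hC1ST : C1 ⊆ S ∩ T := Set.subset_union_left.trans hinter.superset
  have hC2ST : C2 ⊆ S ∩ T := Set.subset_union_right.trans hinter.superset
  have hS1 : (S ∩ C1).Nonempty := hC1.mono fun v hv ↦ ⟨(hC1ST hv).1, hv⟩
  have hS2 : (S ∩ C2).Nonempty := hC2.mono fun v hv ↦ ⟨(hC2ST hv).1, hv⟩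
  have hT1 : (T ∩ C1).Nonempty := hC1.mono fun v hv ↦ ⟨(hC1ST hv).2, hv⟩
  have hpos := inducedSetDist_pos hS hS1 hS2 hC12
  exact exists_isGeodesicCycle_of_boundary_values
    (f := fun v ↦ truncatedDist G S C1 C2 v) (g := fun v ↦ truncatedDist G T C1 C2 v)
    hC1 hC2 hinter hST hEC hS.preconnected hT.preconnected
    (fun _ hu _ hv ↦ abs_truncatedDist_sub_le_one hS hS1 hu hv)
    (fun _ hu _ hv ↦ abs_truncatedDist_sub_le_one hT hT1 hu hv)
    (fun _ hv ↦ congrArg _ (truncatedDist_of_mem_left ⟨(hC1ST hv).1, hv⟩))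
    (fun _ hv ↦ congrArg _ (truncatedDist_of_mem_left ⟨(hC1ST hv).2, hv⟩))
    (fun _ hv ↦ congrArg _ (truncatedDist_of_mem_right hS1 ⟨(hC2ST hv).1, hv⟩))
    (fun _ hv ↦ congrArg _ (truncatedDist_of_mem_right hT1 ⟨(hC2ST hv).2, hv⟩))
    (Nat.add_pos_left hpos _)

theorem union_inter_union_of_disjoint {α : Type*} {A B : Set α} (C1 C2 : Set α)
    (hAB : Disjoint A B) : (A ∪ C1 ∪ C2) ∩ (B ∪ C1 ∪ C2) = C1 ∪ C2 := by
  rw [Set.union_assoc, Set.union_assoc, ← Set.inter_union_distrib_right, hAB.inter_eq,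
    Set.empty_union]

theorem mem_union_or_mem_union_of_adj {G : SimpleGraph V} {A B C1 C2 : Set V}
    (hcover : A ∪ B ∪ C1 ∪ C2 = Set.univ) (hEAB : ∀ a ∈ A, ∀ b ∈ B, ¬ G.Adj a b) ⦃u v : V⦄
    (huv : G.Adj u v) :
    u ∈ A ∪ C1 ∪ C2 ∧ v ∈ A ∪ C1 ∪ C2 ∨ u ∈ B ∪ C1 ∪ C2 ∧ v ∈ B ∪ C1 ∪ C2 := by
  have hu : u ∈ A ∪ B ∪ C1 ∪ C2 := hcover ▸ Set.mem_univ u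
  have hv : v ∈ A ∪ B ∪ C1 ∪ C2 := hcover ▸ Set.mem_univ v
  have huAvB : u ∈ A → v ∉ B := fun hu hv ↦ hEAB u hu v hv huv
  have huBvA : u ∈ B → v ∉ A := fun hu hv ↦ hEAB v hv u hu huv.symm
  simp only [Set.mem_union] at hu hv ⊢
  tauto

/-- Let `G` be a finite simple graph whose vertex set is partitioned as
`A ⊔ B ⊔ C1 ⊔ C2` with `C1, C2` nonempty, no edges between `A` and `B` nor between `C1`
and `C2`, with `C1` and `C2` inducing complete graphs, and with the induced subgraphs
`G_A` on `A ∪ C1 ∪ C2` and `G_B` on `B ∪ C1 ∪ C2` connected. Then `G` contains a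
geodesic cycle of length at least `d_{G_A}(C1,C2) + d_{G_B}(C1,C2)`. -/
theorem geodesic_cycle_of_partition (G : SimpleGraph V) [Fintype V]
    (A B C1 C2 : Set V) (hC1 : C1.Nonempty) (hC2 : C2.Nonempty)
    (hcover : A ∪ B ∪ C1 ∪ C2 = Set.univ)
    (hAB : Disjoint A B) (hAC1 : Disjoint A C1) (hAC2 : Disjoint A C2)
    (hBC1 : Disjoint B C1) (hBC2 : Disjoint B C2) (hC12 : Disjoint C1 C2)
    (hEAB : ∀ a ∈ A, ∀ b ∈ B, ¬ G.Adj a b)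
    (hEC : ∀ x ∈ C1, ∀ y ∈ C2, ¬ G.Adj x y)
    (hcomp1 : ∀ x ∈ C1, ∀ y ∈ C1, x ≠ y → G.Adj x y)
    (hcomp2 : ∀ x ∈ C2, ∀ y ∈ C2, x ≠ y → G.Adj x y)
    (hGA : (G.induce (A ∪ C1 ∪ C2)).Connected)
    (hGB : (G.induce (B ∪ C1 ∪ C2)).Connected) :
    ∃ (n : ℕ) (c : ZMod n → V), IsGeodesicCycle G n c ∧
      inducedSetDist G (A ∪ C1 ∪ C2) C1 C2 + inducedSetDist G (B ∪ C1 ∪ C2) C1 C2 ≤ n := by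
  exact geodesic_cycle_of_partition_general G hC1 hC2 hC12 (union_inter_union_of_disjoint C1 C2 hAB)
    (mem_union_or_mem_union_of_adj hcover hEAB) hEC hGA hGB
end

section
/- Let G be a connected, simple graph with maximum degree at most 3, nonnegative Ricci curvature, and diameter at least 6, and let P = v_0 v_1 ⋯ v_l be a diameter path of G with l ≥ 6. Suppose there exists i with 3 ≤ i ≤ l − 3 such that v_i has a third neighbor u_i ∉ {v_{i−1}, v_{i+1}} with d(v_0, u_i) = i. Then for every j with 3 ≤ j ≤ l − 3, the vertex v_j has a third neighbor u_j ∉ {v_{j−1}, v_{j+1}} with d(v_0, u_j) = j, and moreover u_j is adjacent to u_{j+1} for every j with 3 ≤ j ≤ l − 4. -/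
open SimpleGraph

variable {V : Type*}

/-!
If `κ(u, v) ≥ 0` on an edge of a graph of degree at most three, then the other two neighbors of `u`
can be matched with the other two neighbors of `v` at total cost at most `4`. In addition, the
Laplacian of the distance to a fixed vertex does not increase along edges leading away from it.
Along a geodesic issuing from `v 0` the second fact says that the height `d(v 0, t k) - k` of the
third neighbor `t k` of `v k` never increases. The first fact shows that `t (k + 1)` is adjacent to
`t k` as soon as both have height `0`. It also carries a negative height forwards and a positive
height backwards: the third neighbors then continue as a path along the geodesic. So if the height
changed next to a horizontal neighbor, or if there were no third neighbor at all, then some vertex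
would acquire a fourth neighbor or the Laplacian would increase along an edge.
-/

section Curvature

/-- Functions that are `1`-Lipschitz for the graph distance, the test functions of `ricci`. -/
def DistLipschitz (G : SimpleGraph V) (f : V → ℝ) : Prop :=
  ∀ x y : V, |f x - f y| ≤ G.dist x y

variable {G : SimpleGraph V} {f g : V → ℝ}

lemma distLipschitz_of_le_add (h : ∀ x y, f x ≤ f y + G.dist x y) : DistLipschitz G f := by
  intro x y
  have hyx := h y x
  rw [G.dist_comm] at hyx
  exact abs_sub_le_iff.2 ⟨by linarith [h x y], by linarith⟩

lemma DistLipschitz.le_add (hf : DistLipschitz G f) (x y : V) : f x ≤ f y + G.dist x y := by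
  linarith [(abs_le.1 (hf x y)).2]

lemma distLipschitz_dist (hconn : G.Connected) (o : V) : DistLipschitz G (G.dist o ·) :=
  distLipschitz_of_le_add fun x y => by
    rw [G.dist_comm (u := x)]
    exact_mod_cast hconn.dist_triangle

lemma DistLipschitz.sub_const (hf : DistLipschitz G f) (c : ℝ) : DistLipschitz G (f · - c) := by
  simpa only [DistLipschitz, sub_sub_sub_cancel_right] using hf

lemma DistLipschitz.neg (hf : DistLipschitz G f) : DistLipschitz G (-f) := by
  intro x y
  simpa only [Pi.neg_apply, neg_sub_neg, abs_sub_comm (f y)] using hf x y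

lemma DistLipschitz.min (hf : DistLipschitz G f) (hg : DistLipschitz G g) :
    DistLipschitz G (fun x => min (f x) (g x)) :=
  distLipschitz_of_le_add fun x y => by
    rw [← min_add_add_right]
    exact min_le_min (hf.le_add x y) (hg.le_add x y)

variable [G.LocallyFinite]

lemma lapl_neg (f : V → ℝ) (x : V) : lapl G (-f) x = -lapl G f x := by
  simp only [lapl, Pi.neg_apply, ← Finset.sum_neg_distrib]
  exact Finset.sum_congr rfl fun y _ => by ring

lemma DistLipschitz.abs_lapl_le (hf : DistLipschitz G f) (x : V) : |lapl G f x| ≤ G.degree x := by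
  calc |lapl G f x| ≤ ∑ y ∈ G.neighborFinset x, |f y - f x| := Finset.abs_sum_le_sum_abs _ _
    _ ≤ ∑ _y ∈ G.neighborFinset x, (1 : ℝ) := Finset.sum_le_sum fun y hy => by
        have hyx : G.dist y x = 1 := dist_eq_one_iff_adj.2 ((G.mem_neighborFinset x y).1 hy).symm
        simpa only [hyx, Nat.cast_one] using hf y x
    _ = G.degree x := by simp

lemma DistLipschitz.ricci_le (hf : DistLipschitz G f) {u v : V} (h : f v - f u = 1) :
    ricci G u v ≤ lapl G f u - lapl G f v := by
  refine csInf_le ⟨-(G.degree u : ℝ) - G.degree v, ?_⟩ ⟨f, hf, h, rfl⟩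
  rintro r ⟨g, hg, -, rfl⟩
  have hu := abs_le.1 (DistLipschitz.abs_lapl_le hg u)
  have hv := abs_le.1 (DistLipschitz.abs_lapl_le hg v)
  linarith [hu.1, hv.2]

lemma ricci_comm (u v : V) : ricci G u v = ricci G v u := by
  suffices h : ∀ u v : V, ∀ r : ℝ,
      (∃ f, DistLipschitz G f ∧ f v - f u = 1 ∧ r = lapl G f u - lapl G f v) →
        ∃ f, DistLipschitz G f ∧ f u - f v = 1 ∧ r = lapl G f v - lapl G f u from
    congrArg sInf (Set.ext fun r => ⟨h u v r, h v u r⟩)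
  rintro u v r ⟨f, hf, hfuv, rfl⟩
  refine ⟨-f, hf.neg, ?_, ?_⟩
  · simpa only [Pi.neg_apply, neg_sub_neg] using hfuv
  · rw [lapl_neg, lapl_neg]
    ring

end Curvature

section Distance

variable {G : SimpleGraph V} {o x y : V}

lemma dist_le_dist_add_one_of_adj (h : G.Adj x y) : G.dist o y ≤ G.dist o x + 1 := by
  have := h.diff_dist_adj (u := o)
  omega

lemma dist_le_one_iff (hconn : G.Connected) : G.dist x y ≤ 1 ↔ x = y ∨ G.Adj x y := by
  rw [Nat.le_one_iff_eq_zero_or_eq_one, hconn.dist_eq_zero_iff, dist_eq_one_iff_adj]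

lemma exists_adj_dist_eq_of_dist_eq_succ {n : ℕ} (h : G.dist o x = n + 1) :
    ∃ y, G.Adj x y ∧ G.dist o y = n := by
  rw [G.dist_comm] at h
  obtain ⟨w, hw⟩ := exists_walk_of_dist_ne_zero (h.trans_ne n.succ_ne_zero)
  match w with
  | .nil => simp at h
  | .cons (v := y) hxy w =>
    have hyo : G.dist y o ≤ w.length := dist_le w
    have hox : G.dist o x ≤ G.dist o y + 1 := dist_le_dist_add_one_of_adj hxy.symm
    rw [Walk.length_cons] at hw
    rw [G.dist_comm] at hox hyo
    exact ⟨y, hxy, by rw [G.dist_comm (u := o)] at *; omega⟩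

end Distance

section PaddedNbhd

/-- The distinct vertices `a`, `b`, `c` other than `p` are the neighbors of `p`. Allowing one of
them to be `p` itself treats vertices of degree two and three uniformly. -/
structure IsPaddedNbhd (G : SimpleGraph V) (p a b c : V) : Prop where
  ne_ab : a ≠ b
  ne_ac : a ≠ c
  ne_bc : b ≠ c
  adj_iff : ∀ z, G.Adj p z ↔ z ≠ p ∧ (z = a ∨ z = b ∨ z = c)

namespace IsPaddedNbhd

variable {G : SimpleGraph V} {p a b c : V}

lemma rotate (h : IsPaddedNbhd G p a b c) : IsPaddedNbhd G p b c a :=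
  ⟨h.ne_bc, h.ne_ab.symm, h.ne_ac.symm, fun z => by rw [h.adj_iff]; tauto⟩

lemma swap_left (h : IsPaddedNbhd G p a b c) : IsPaddedNbhd G p b a c :=
  ⟨h.ne_ab.symm, h.ne_bc, h.ne_ac, fun z => by rw [h.adj_iff]; tauto⟩

lemma swap_right (h : IsPaddedNbhd G p a b c) : IsPaddedNbhd G p a c b :=
  h.swap_left.rotate

lemma of_adj [G.LocallyFinite] (hdeg : G.degree p ≤ 3) (ha : G.Adj p a) (hb : G.Adj p b)
    (hc : G.Adj p c) (hab : a ≠ b) (hac : a ≠ c) (hbc : b ≠ c) : IsPaddedNbhd G p a b c := by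
  classical
  have hsub : {a, b, c} ⊆ G.neighborFinset p := by
    simp [Finset.insert_subset_iff, ha, hb, hc]
  have hcard : ({a, b, c} : Finset V).card = 3 :=
    Finset.card_eq_three.2 ⟨a, b, c, hab, hac, hbc, rfl⟩
  have heq : {a, b, c} = G.neighborFinset p := Finset.eq_of_subset_of_card_le hsub (hcard ▸ hdeg)
  refine ⟨hab, hac, hbc, fun z => ?_⟩
  have hz : G.Adj p z ↔ z = a ∨ z = b ∨ z = c := by
    simpa only [Finset.mem_insert, Finset.mem_singleton, mem_neighborFinset] using
      (Finset.ext_iff.1 heq z).symm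
  exact ⟨fun h => ⟨h.ne', hz.1 h⟩, fun h => hz.2 h.2⟩

lemma exists_of_adj [G.LocallyFinite] (hdeg : G.degree p ≤ 3) (ha : G.Adj p a) (hb : G.Adj p b)
    (hab : a ≠ b) : ∃ c, IsPaddedNbhd G p a b c := by
  by_cases h : ∃ c, G.Adj p c ∧ a ≠ c ∧ b ≠ c
  · obtain ⟨c, hc, hac, hbc⟩ := h
    exact ⟨c, of_adj hdeg ha hb hc hab hac hbc⟩
  · exact ⟨p, hab, ha.ne', hb.ne', by grind [SimpleGraph.irrefl]⟩

lemma lapl_eq [G.LocallyFinite] (h : IsPaddedNbhd G p a b c) (f : V → ℝ) :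
    lapl G f p = f a + f b + f c - 3 * f p := by
  classical
  have hnbr : G.neighborFinset p = ({a, b, c} : Finset V).erase p := by
    ext z
    simp only [mem_neighborFinset, Finset.mem_erase, Finset.mem_insert, Finset.mem_singleton,
      h.adj_iff]
  rw [lapl, hnbr, Finset.sum_erase _ (sub_self _), Finset.sum_insert (by simp [h.ne_ab, h.ne_ac]),
    Finset.sum_pair h.ne_bc]
  ring

lemma dist_le_one_iff (h : IsPaddedNbhd G p a b c) (hconn : G.Connected) {z : V} :
    G.dist p z ≤ 1 ↔ z = p ∨ z = a ∨ z = b ∨ z = c := by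
  rw [_root_.dist_le_one_iff hconn, h.adj_iff]
  tauto

lemma dist_le_one_of_dist_le_two (h : IsPaddedNbhd G p a b c) (hconn : G.Connected) {z : V}
    (hz : G.dist p z ≤ 2) : G.dist a z ≤ 1 ∨ G.dist b z ≤ 1 ∨ G.dist c z ≤ 1 := by
  rw [G.dist_comm] at hz
  obtain hz | hz : G.dist z p = 2 ∨ G.dist z p ≤ 1 := by omega
  · obtain ⟨s, hps, hzs⟩ := exists_adj_dist_eq_of_dist_eq_succ hz
    rw [G.dist_comm] at hzs
    obtain rfl | rfl | rfl := ((h.adj_iff s).1 hps).2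
    all_goals simp [hzs]
  · rw [G.dist_comm, h.dist_le_one_iff hconn] at hz
    obtain rfl | rfl | rfl | rfl := hz
    · exact Or.inl (by rw [G.dist_comm, h.dist_le_one_iff hconn]; tauto)
    all_goals simp

end IsPaddedNbhd

end PaddedNbhd

section Transport

variable {G : SimpleGraph V} [G.LocallyFinite] {u v x₁ x₂ y₁ y₂ : V}

lemma ricci_neg_of_far (hconn : G.Connected) (huv : G.Adj u v) (hu : IsPaddedNbhd G u v x₁ x₂)
    (hv : IsPaddedNbhd G v u y₁ y₂) (h₁₁ : 3 ≤ G.dist x₁ y₁) (h₁₂ : 3 ≤ G.dist x₁ y₂)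
    (h₂₁ : 2 ≤ G.dist x₂ y₁) (h₂₂ : 2 ≤ G.dist x₂ y₂) : ricci G u v < 0 := by
  let f : V → ℝ := fun z => min (G.dist x₁ z - 1) (G.dist x₂ z)
  have hf : DistLipschitz G f :=
    ((distLipschitz_dist hconn x₁).sub_const 1).min (distLipschitz_dist hconn x₂)
  have hux₁ : G.dist u x₁ ≤ 1 := (hu.dist_le_one_iff hconn).2 (by tauto)
  have hvy₁ : G.dist v y₁ ≤ 1 := (hv.dist_le_one_iff hconn).2 (by tauto)
  have huv' : G.dist u v = 1 := dist_eq_one_iff_adj.2 huv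
  have hx₁v := hconn.dist_triangle (u := x₁) (v := u) (w := v)
  have hx₁y₁ := hconn.dist_triangle (u := x₁) (v := v) (w := y₁)
  have hx₂y₁ := hconn.dist_triangle (u := x₂) (v := v) (w := y₁)
  rw [G.dist_comm] at hux₁
  have hfu : f u = 0 := by
    have hx₁u : (G.dist x₁ u : ℝ) = 1 := mod_cast (by omega : G.dist x₁ u = 1)
    simp [f, hx₁u]
  have hfv : f v = 1 := by
    have hx₁v : (G.dist x₁ v : ℝ) = 2 := mod_cast (by omega : G.dist x₁ v = 2)
    have hx₂v : (1 : ℝ) ≤ G.dist x₂ v := mod_cast (by omega : 1 ≤ G.dist x₂ v)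
    simp only [f, hx₁v]
    rw [min_eq_left] <;> linarith
  have hfx₁ : f x₁ ≤ -1 := min_le_of_left_le (by simp)
  have hfx₂ : f x₂ ≤ 0 := min_le_of_right_le (by simp)
  have hfy {y : V} (h₁ : 3 ≤ G.dist x₁ y) (h₂ : 2 ≤ G.dist x₂ y) : 2 ≤ f y := by
    have h₁' : (3 : ℝ) ≤ G.dist x₁ y := mod_cast h₁
    exact le_min (by linarith) (mod_cast h₂)
  have hric := hf.ricci_le (u := u) (v := v) (by rw [hfu, hfv, sub_zero])
  rw [hu.lapl_eq, hv.lapl_eq] at hric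
  linarith [hfy h₁₁ h₂₁, hfy h₁₂ h₂₂]

lemma dist_add_dist_le_four_of_ricci_nonneg (hconn : G.Connected) (huv : G.Adj u v)
    (hric : 0 ≤ ricci G u v) (hu : IsPaddedNbhd G u v x₁ x₂) (hv : IsPaddedNbhd G v u y₁ y₂) :
    G.dist x₁ y₁ + G.dist x₂ y₂ ≤ 4 ∨ G.dist x₁ y₂ + G.dist x₂ y₁ ≤ 4 := by
  have hric' : 0 ≤ ricci G v u := hric.trans_eq (ricci_comm u v)
  have hle {x y : V} (hx : x = u ∨ x = v ∨ x = x₁ ∨ x = x₂)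
      (hy : y = v ∨ y = u ∨ y = y₁ ∨ y = y₂) : G.dist x y ≤ 3 := by
    have hux := (hu.dist_le_one_iff hconn).2 hx
    have hvy := (hv.dist_le_one_iff hconn).2 hy
    have huv' : G.dist u v = 1 := dist_eq_one_iff_adj.2 huv
    have hxv := hconn.dist_triangle (u := x) (v := u) (w := v)
    have hxy := hconn.dist_triangle (u := x) (v := v) (w := y)
    rw [G.dist_comm] at hux
    omega
  have h₁₁ : G.dist x₁ y₁ ≤ 3 := hle (by tauto) (by tauto)
  have h₁₂ : G.dist x₁ y₂ ≤ 3 := hle (by tauto) (by tauto)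
  have h₂₁ : G.dist x₂ y₁ ≤ 3 := hle (by tauto) (by tauto)
  have h₂₂ : G.dist x₂ y₂ ≤ 3 := hle (by tauto) (by tauto)
  by_contra! h
  -- If both matchings cost at least `5`, some vertex is at distance `3` from both of its partners.
  obtain ⟨h₁₁', h₂₂'⟩ | ⟨h₁₁', h₁₂'⟩ | ⟨h₂₂', h₁₂'⟩ | ⟨h₂₂', h₂₁'⟩ :
      (3 ≤ G.dist x₁ y₁ ∧ 3 ≤ G.dist x₂ y₁) ∨ (3 ≤ G.dist x₁ y₁ ∧ 3 ≤ G.dist x₁ y₂) ∨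
      (3 ≤ G.dist x₂ y₂ ∧ 3 ≤ G.dist x₁ y₂) ∨ (3 ≤ G.dist x₂ y₂ ∧ 3 ≤ G.dist x₂ y₁) := by omega
  · refine (ricci_neg_of_far hconn huv.symm hv hu ?_ ?_ ?_ ?_).not_ge hric' <;>
      rw [G.dist_comm] <;> omega
  · refine (ricci_neg_of_far hconn huv hu hv ?_ ?_ ?_ ?_).not_ge hric <;> omega
  · refine (ricci_neg_of_far hconn huv.symm hv.swap_right hu ?_ ?_ ?_ ?_).not_ge hric' <;>
      rw [G.dist_comm] <;> omega
  · refine (ricci_neg_of_far hconn huv hu.swap_right hv ?_ ?_ ?_ ?_).not_ge hric <;> omega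

lemma dist_nbhd_add_le_of_ricci_nonneg (hconn : G.Connected) (hric : 0 ≤ ricci G u v) (o : V)
    {a b c a' b' c' : V} (hu : IsPaddedNbhd G u a b c) (hv : IsPaddedNbhd G v a' b' c')
    (huv : G.dist o v = G.dist o u + 1) :
    G.dist o a' + G.dist o b' + G.dist o c' ≤ G.dist o a + G.dist o b + G.dist o c + 3 := by
  have h := (distLipschitz_dist hconn o).ricci_le (u := u) (v := v) (by simp [huv])
  rw [hu.lapl_eq, hv.lapl_eq, huv] at h
  rify
  push_cast at h
  linarith

end Transport

/-- `v 0, …, v l` is a geodesic, and `t k` completes the neighborhood of each inner vertex `v k`,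
with `t k = v k` if `v k` has degree two; `t 0` and `t l` are arbitrary. -/
structure IsFramedGeodesic (G : SimpleGraph V) (l : ℕ) (v t : ℕ → V) : Prop where
  adj : ∀ k < l, G.Adj (v k) (v (k + 1))
  dist_eq : ∀ k ≤ l, G.dist (v 0) (v k) = k
  nbhd : ∀ k, k + 2 ≤ l → IsPaddedNbhd G (v (k + 1)) (v k) (v (k + 2)) (t (k + 1))

/-- The third vertex `t k` is a neighbor of `v k` and as far from `v 0` as `v k`. -/
def IsHorizontal (G : SimpleGraph V) (v t : ℕ → V) (k : ℕ) : Prop :=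
  G.Adj (v k) (t k) ∧ G.dist (v 0) (t k) = k

namespace IsFramedGeodesic

section Height

variable {G : SimpleGraph V} {l k : ℕ} {v t : ℕ → V} {x : V} (P : IsFramedGeodesic G l v t)

include P

lemma eq_third_of_adj (hk : k + 2 ≤ l) (hx : G.Adj (v (k + 1)) x) (hprev : x ≠ v k)
    (hnext : x ≠ v (k + 2)) : x = t (k + 1) := by
  have h := ((P.nbhd k hk).adj_iff x).1 hx
  tauto

lemma adj_third (hpos : 0 < k) (hk : k < l) (h : t k ≠ v k) : G.Adj (v k) (t k) := by
  obtain ⟨k, rfl⟩ := Nat.exists_eq_add_one.2 hpos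
  exact ((P.nbhd k hk).adj_iff _).2 ⟨h, by tauto⟩

lemma adj_third_of_dist_ne (hpos : 0 < k) (hk : k < l) (h : G.dist (v 0) (t k) ≠ k) :
    G.Adj (v k) (t k) :=
  P.adj_third hpos hk fun heq => h (by rw [heq, P.dist_eq k hk.le])

lemma dist_third_le (hpos : 0 < k) (hk : k < l) : G.dist (v 0) (t k) ≤ k + 1 := by
  have hv := P.dist_eq k hk.le
  obtain heq | hne := eq_or_ne (t k) (v k)
  · rw [heq, hv]
    omega
  · exact (dist_le_dist_add_one_of_adj (P.adj_third hpos hk hne)).trans_eq (by rw [hv])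

lemma le_dist_third_add_one (hpos : 0 < k) (hk : k < l) : k ≤ G.dist (v 0) (t k) + 1 := by
  have hv := P.dist_eq k hk.le
  obtain heq | hne := eq_or_ne (t k) (v k)
  · rw [heq, hv]
    omega
  · exact hv.symm.trans_le (dist_le_dist_add_one_of_adj (P.adj_third hpos hk hne).symm)

variable [G.LocallyFinite] (hconn : G.Connected) (hric : NonnegRicci G)

include hconn hric

lemma dist_third_succ_le (hk : k + 3 ≤ l) :
    G.dist (v 0) (t (k + 2)) ≤ G.dist (v 0) (t (k + 1)) + 1 := by
  have hv₀ := P.dist_eq k (by omega)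
  have hv₁ := P.dist_eq (k + 1) (by omega)
  have hv₂ := P.dist_eq (k + 2) (by omega)
  have hv₃ := P.dist_eq (k + 3) hk
  have hN₂ : IsPaddedNbhd G (v (k + 2)) (v (k + 1)) (v (k + 3)) (t (k + 2)) := P.nbhd (k + 1) hk
  have h₁₂ : G.Adj (v (k + 1)) (v (k + 2)) := P.adj (k + 1) (by omega)
  have h := dist_nbhd_add_le_of_ricci_nonneg hconn (hric _ _ h₁₂) (v 0)
    (P.nbhd k (by omega)) hN₂ (by omega)
  omega

lemma dist_third_le_one_or (hk : k + 3 ≤ l) : G.dist (t (k + 1)) (t (k + 2)) ≤ 1 ∨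
    G.dist (v k) (t (k + 2)) + G.dist (t (k + 1)) (v (k + 3)) ≤ 4 := by
  have hv₀ := P.dist_eq k (by omega)
  have hv₃ := P.dist_eq (k + 3) hk
  have hv₀₃ := hconn.dist_triangle (u := v 0) (v := v k) (w := v (k + 3))
  have h₁₂ : G.Adj (v (k + 1)) (v (k + 2)) := P.adj (k + 1) (by omega)
  have hN₂ : IsPaddedNbhd G (v (k + 2)) (v (k + 1)) (v (k + 3)) (t (k + 2)) := P.nbhd (k + 1) hk
  have h := dist_add_dist_le_four_of_ricci_nonneg hconn h₁₂ (hric _ _ h₁₂)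
    (P.nbhd k (by omega)).swap_left hN₂
  omega

lemma dist_third_le_one_or_of_ne_left (hk : k + 4 ≤ l) (hne : t (k + 1) ≠ v (k + 1)) :
    G.dist (t (k + 1)) (t (k + 2)) ≤ 1 ∨ G.dist (t (k + 1)) (t (k + 3)) ≤ 1 ∨
      G.dist (v k) (t (k + 2)) ≤ 1 := by
  obtain h | h := P.dist_third_le_one_or hconn hric (k := k) (by omega)
  · exact Or.inl h
  obtain h | h : G.dist (v k) (t (k + 2)) ≤ 1 ∨ G.dist (v (k + 3)) (t (k + 1)) ≤ 2 := by
    rw [G.dist_comm (u := v (k + 3))]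
    omega
  · exact Or.inr (Or.inr h)
  have hl₁ := P.dist_third_le (k := k + 1) (by omega) (by omega)
  have hv₃ := P.dist_eq (k + 3) (by omega)
  have hv₄ := P.dist_eq (k + 4) hk
  have hN₂ : IsPaddedNbhd G (v (k + 2)) (v (k + 1)) (v (k + 3)) (t (k + 2)) :=
    P.nbhd (k + 1) (by omega)
  have hN₃ : IsPaddedNbhd G (v (k + 3)) (v (k + 2)) (v (k + 4)) (t (k + 3)) := P.nbhd (k + 2) hk
  obtain h | h | h := hN₃.dist_le_one_of_dist_le_two hconn h
  · rw [hN₂.dist_le_one_iff hconn] at h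
    obtain h | h | h | h := h
    · exact absurd h.symm (P.nbhd k (by omega)).ne_bc
    · exact absurd h hne
    · exact absurd h (ne_of_apply_ne (G.dist (v 0)) (by omega))
    · exact Or.inl (by simp [h])
  · have := hconn.dist_triangle (u := v 0) (v := t (k + 1)) (w := v (k + 4))
    rw [G.dist_comm] at h
    omega
  · exact Or.inr (Or.inl (G.dist_comm.trans_le h))

lemma dist_third_le_one_or_of_ne_right (hk : k + 4 ≤ l) (hne : t (k + 3) ≠ v (k + 3)) :
    G.dist (t (k + 2)) (t (k + 3)) ≤ 1 ∨ G.dist (t (k + 1)) (t (k + 3)) ≤ 1 ∨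
      G.dist (t (k + 2)) (v (k + 4)) ≤ 1 := by
  have h : G.dist (t (k + 2)) (t (k + 3)) ≤ 1 ∨
      G.dist (v (k + 1)) (t (k + 3)) + G.dist (t (k + 2)) (v (k + 4)) ≤ 4 :=
    P.dist_third_le_one_or hconn hric (k := k + 1) hk
  obtain h | h | h : G.dist (t (k + 2)) (t (k + 3)) ≤ 1 ∨ G.dist (t (k + 2)) (v (k + 4)) ≤ 1 ∨
      G.dist (v (k + 1)) (t (k + 3)) ≤ 2 := by omega
  · exact Or.inl h
  · exact Or.inr (Or.inr h)
  have hl₃ := P.le_dist_third_add_one (k := k + 3) (by omega) (by omega)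
  have hv₀ := P.dist_eq k (by omega)
  have hv₁ := P.dist_eq (k + 1) (by omega)
  have hN₂ : IsPaddedNbhd G (v (k + 2)) (v (k + 1)) (v (k + 3)) (t (k + 2)) :=
    P.nbhd (k + 1) (by omega)
  have hN₃ : IsPaddedNbhd G (v (k + 3)) (v (k + 2)) (v (k + 4)) (t (k + 3)) := P.nbhd (k + 2) hk
  obtain h | h | h := (P.nbhd k (by omega)).dist_le_one_of_dist_le_two hconn h
  · have := hconn.dist_triangle (u := v 0) (v := v k) (w := t (k + 3))
    omega
  · rw [hN₂.dist_le_one_iff hconn] at h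
    obtain h | h | h | h := h
    · exact absurd h.symm hN₃.ne_ac
    · exact absurd h (ne_of_apply_ne (G.dist (v 0)) (by omega))
    · exact absurd h hne
    · exact Or.inl (by simp [h])
  · exact Or.inr (Or.inl h)

lemma rising_pred (hk : k + 4 ≤ l) (h₂ : G.dist (v 0) (t (k + 2)) = k + 3)
    (h₃ : k + 3 ≤ G.dist (v 0) (t (k + 3))) :
    G.dist (v 0) (t (k + 1)) = k + 2 ∧ G.Adj (t (k + 1)) (t (k + 2)) := by
  have hv₀ := P.dist_eq k (by omega)
  have hv₂ := P.dist_eq (k + 2) (by omega)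
  have hv₃ := P.dist_eq (k + 3) (by omega)
  have hv₄ := P.dist_eq (k + 4) hk
  have hl₁ := P.dist_third_le (k := k + 1) (by omega) (by omega)
  have hv₀t₂ := hconn.dist_triangle (u := v 0) (v := v k) (w := t (k + 2))
  -- Otherwise `t (k + 1)` would be a neighbor of `v (k + 3)`, hence equal to `t (k + 3)`.
  have hfar : ¬ G.dist (t (k + 1)) (v (k + 3)) ≤ 1 := by
    intro h
    have hN₃ : IsPaddedNbhd G (v (k + 3)) (v (k + 2)) (v (k + 4)) (t (k + 3)) :=
      P.nbhd (k + 2) hk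
    rw [G.dist_comm, hN₃.dist_le_one_iff hconn] at h
    obtain h | h | h | h := h
    · rw [h] at hl₁; omega
    · exact (P.nbhd k (by omega)).ne_bc h.symm
    · rw [h] at hl₁; omega
    · rw [h] at hl₁; omega
  have hnear : G.dist (t (k + 1)) (t (k + 2)) ≤ 1 := by
    have := P.dist_third_le_one_or hconn hric (k := k) (by omega)
    omega
  have ht₁t₂ := hconn.dist_triangle (u := v 0) (v := t (k + 1)) (w := t (k + 2))
  have hl₁' : G.dist (v 0) (t (k + 1)) = k + 2 := by omega
  refine ⟨hl₁', ((dist_le_one_iff hconn).1 hnear).resolve_left fun h => ?_⟩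
  rw [h] at hl₁'
  omega

lemma falling_succ (hk : k + 4 ≤ l) (h₁ : G.dist (v 0) (t (k + 1)) ≤ k + 1)
    (h₂ : G.dist (v 0) (t (k + 2)) = k + 1) :
    G.dist (v 0) (t (k + 3)) = k + 2 ∧ G.Adj (t (k + 2)) (t (k + 3)) := by
  have hv₀ := P.dist_eq k (by omega)
  have hv₁ := P.dist_eq (k + 1) (by omega)
  have hv₄ := P.dist_eq (k + 4) hk
  have hl₃ : G.dist (v 0) (t (k + 3)) = k + 2 := by
    have hle : G.dist (v 0) (t (k + 3)) ≤ G.dist (v 0) (t (k + 2)) + 1 :=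
      P.dist_third_succ_le hconn hric (k := k + 1) hk
    have hge := P.le_dist_third_add_one (k := k + 3) (by omega) (by omega)
    omega
  -- Otherwise `t (k + 3)` would be a neighbor of `v (k + 1)`, hence equal to `t (k + 1)`.
  have hfar : ¬ G.dist (v (k + 1)) (t (k + 3)) ≤ 1 := by
    have hN₃ : IsPaddedNbhd G (v (k + 3)) (v (k + 2)) (v (k + 4)) (t (k + 3)) :=
      P.nbhd (k + 2) hk
    rw [(P.nbhd k (by omega)).dist_le_one_iff hconn]
    rintro (h | h | h | h)
    · rw [h] at hl₃; omega
    · rw [h] at hl₃; omega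
    · exact hN₃.ne_ac h.symm
    · rw [h] at hl₃; omega
  have ht₂v₄ := hconn.dist_triangle (u := v 0) (v := t (k + 2)) (w := v (k + 4))
  have hnear : G.dist (t (k + 2)) (t (k + 3)) ≤ 1 := by
    have : G.dist (t (k + 2)) (t (k + 3)) ≤ 1 ∨
        G.dist (v (k + 1)) (t (k + 3)) + G.dist (t (k + 2)) (v (k + 4)) ≤ 4 :=
      P.dist_third_le_one_or hconn hric (k := k + 1) hk
    omega
  refine ⟨hl₃, ((dist_le_one_iff hconn).1 hnear).resolve_left fun h => ?_⟩
  rw [h] at h₂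
  omega

lemma adj_third_add_two_of_third_eq (hk : k + 4 ≤ l) (h₂ : t (k + 2) = v (k + 2))
    (h₃ : IsHorizontal G v t (k + 3)) :
    G.dist (v 0) (t (k + 1)) = k + 2 ∧ G.Adj (t (k + 1)) (t (k + 3)) := by
  obtain ⟨hv₃t₃, hl₃⟩ := h₃
  have hl₁ := P.dist_third_le (k := k + 1) (by omega) (by omega)
  have hv₁ := P.dist_eq (k + 1) (by omega)
  have hv₂ := P.dist_eq (k + 2) (by omega)
  have hv₄ := P.dist_eq (k + 4) hk
  have hN₂ : IsPaddedNbhd G (v (k + 2)) (v (k + 1)) (v (k + 3)) (t (k + 2)) :=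
    P.nbhd (k + 1) (by omega)
  have ht₁t₃ : G.dist (t (k + 1)) (t (k + 3)) ≤ 1 := by
    have htrans := P.dist_third_le_one_or_of_ne_right hconn hric hk hv₃t₃.ne'
    rw [h₂] at htrans hN₂
    obtain h | h | h := htrans
    · rw [hN₂.dist_le_one_iff hconn] at h
      obtain h | h | h | h := h
      · exact absurd h (ne_of_apply_ne (G.dist (v 0)) (by omega))
      · exact absurd h (ne_of_apply_ne (G.dist (v 0)) (by omega))
      · exact absurd h hv₃t₃.ne'
      · exact absurd h (ne_of_apply_ne (G.dist (v 0)) (by omega))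
    · exact h
    · have := hconn.dist_triangle (u := v 0) (v := v (k + 2)) (w := v (k + 4))
      omega
  have htri := hconn.dist_triangle (u := v 0) (v := t (k + 1)) (w := t (k + 3))
  exact ⟨by omega, ((dist_le_one_iff hconn).1 ht₁t₃).resolve_left
    (ne_of_apply_ne (G.dist (v 0)) (by omega))⟩

end Height

section Propagation

variable {G : SimpleGraph V} [G.LocallyFinite] {l k : ℕ} {v t : ℕ → V}
  (hconn : G.Connected) (hdeg : ∀ x, G.degree x ≤ 3) (hric : NonnegRicci G)
  (P : IsFramedGeodesic G l v t)

include hconn hdeg hric P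

lemma not_adj_third_add_two (hk : k + 5 ≤ l) (h₁ : IsHorizontal G v t (k + 1))
    (h₃ : G.dist (v 0) (t (k + 3)) = k + 2) : ¬ G.Adj (t (k + 1)) (t (k + 3)) := by
  intro ht₁t₃
  obtain ⟨hv₁t₁, hl₁⟩ := h₁
  have hv₁ := P.dist_eq (k + 1) (by omega)
  have hv₃ := P.dist_eq (k + 3) (by omega)
  have hl₂ : G.dist (v 0) (t (k + 2)) ≤ k + 2 :=
    (P.dist_third_succ_le hconn hric (by omega)).trans_eq (by rw [hl₁])
  obtain ⟨hl₄, ht₃t₄⟩ : G.dist (v 0) (t (k + 4)) = k + 3 ∧ G.Adj (t (k + 3)) (t (k + 4)) :=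
    P.falling_succ hconn hric (k := k + 1) hk hl₂ h₃
  have hv₃t₃ : G.Adj (v (k + 3)) (t (k + 3)) :=
    P.adj_third_of_dist_ne (by omega) (by omega) (by omega)
  have hv₃t₄ : v (k + 3) ≠ t (k + 4) := (P.nbhd (k + 3) hk).ne_ac
  obtain ⟨q, ht₁q, hq⟩ := exists_adj_dist_eq_of_dist_eq_succ hl₁
  have hN₁ : IsPaddedNbhd G (t (k + 1)) q (v (k + 1)) (t (k + 3)) := by
    refine .of_adj (hdeg _) ht₁q hv₁t₁.symm ht₁t₃ ?_ ?_ ?_ <;>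
      exact ne_of_apply_ne (G.dist (v 0)) (by omega)
  have hN₃ : IsPaddedNbhd G (t (k + 3)) (t (k + 1)) (v (k + 3)) (t (k + 4)) :=
    .of_adj (hdeg _) ht₁t₃.symm hv₃t₃.symm ht₃t₄ (ne_of_apply_ne (G.dist (v 0)) (by omega))
      (ne_of_apply_ne (G.dist (v 0)) (by omega)) hv₃t₄
  have := dist_nbhd_add_le_of_ricci_nonneg hconn (hric _ _ ht₁t₃) (v 0) hN₁ hN₃ (by omega)
  omega

lemma one_lt_dist_third_of_falling (hk : k + 4 ≤ l) (h₁ : IsHorizontal G v t (k + 1))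
    (h₂ : G.dist (v 0) (t (k + 2)) = k + 1) : 1 < G.dist (t (k + 1)) (t (k + 2)) := by
  obtain ⟨hv₁t₁, hl₁⟩ := h₁
  have hv₁ := P.dist_eq (k + 1) (by omega)
  have hv₂ := P.dist_eq (k + 2) (by omega)
  obtain ⟨hl₃, ht₂t₃⟩ := P.falling_succ hconn hric hk hl₁.le h₂
  have hv₂t₂ : G.Adj (v (k + 2)) (t (k + 2)) :=
    P.adj_third_of_dist_ne (by omega) (by omega) (by omega)
  have hv₂t₃ : v (k + 2) ≠ t (k + 3) := (P.nbhd (k + 2) (by omega)).ne_ac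
  obtain ⟨q, ht₂q, hq⟩ := exists_adj_dist_eq_of_dist_eq_succ h₂
  have hN₂ : IsPaddedNbhd G (t (k + 2)) q (v (k + 2)) (t (k + 3)) := by
    refine .of_adj (hdeg _) ht₂q hv₂t₂.symm ht₂t₃ ?_ ?_ hv₂t₃ <;>
      exact ne_of_apply_ne (G.dist (v 0)) (by omega)
  rw [G.dist_comm, ← not_le, hN₂.dist_le_one_iff hconn]
  rintro (h | h | h | h)
  · rw [h] at hv₁t₁
    obtain h | h | h := ((hN₂.adj_iff _).1 hv₁t₁.symm).2 <;>
      exact ne_of_apply_ne (G.dist (v 0)) (by omega) h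
  all_goals exact ne_of_apply_ne (G.dist (v 0)) (by omega) h

lemma adj_third_add_two_of_falling (hk : k + 6 ≤ l) (h₂ : IsHorizontal G v t (k + 2))
    (h₃ : G.dist (v 0) (t (k + 3)) = k + 2) : G.Adj (v (k + 1)) (t (k + 3)) := by
  have hl₄ : G.dist (v 0) (t (k + 4)) = k + 3 :=
    (P.falling_succ hconn hric (k := k + 1) (by omega) h₂.2.le h₃).1
  have hl₂ := h₂.2
  have hv₁ := P.dist_eq (k + 1) (by omega)
  have htrans : G.dist (t (k + 2)) (t (k + 3)) ≤ 1 ∨ G.dist (t (k + 2)) (t (k + 4)) ≤ 1 ∨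
      G.dist (v (k + 1)) (t (k + 3)) ≤ 1 :=
    P.dist_third_le_one_or_of_ne_left hconn hric (k := k + 1) (by omega) h₂.1.ne'
  obtain h | h | h := htrans
  · have hlt : 1 < G.dist (t (k + 2)) (t (k + 3)) :=
      P.one_lt_dist_third_of_falling hconn hdeg hric (k := k + 1) (by omega) h₂ h₃
    exact absurd h hlt.not_ge
  · have hnot : ¬ G.Adj (t (k + 2)) (t (k + 4)) :=
      P.not_adj_third_add_two hconn hdeg hric (k := k + 1) hk h₂ hl₄
    refine absurd (((dist_le_one_iff hconn).1 h).resolve_left ?_) hnot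
    exact ne_of_apply_ne (G.dist (v 0)) (by omega)
  · exact ((dist_le_one_iff hconn).1 h).resolve_left (ne_of_apply_ne (G.dist (v 0)) (by omega))

lemma dist_third_ne_of_isHorizontal (hk : k + 7 ≤ l) (h₃ : IsHorizontal G v t (k + 3)) :
    G.dist (v 0) (t (k + 4)) ≠ k + 3 := by
  intro hl₄
  have hv₂t₄ : G.Adj (v (k + 2)) (t (k + 4)) :=
    P.adj_third_add_two_of_falling hconn hdeg hric (k := k + 1) hk h₃ hl₄
  have hv₁ := P.dist_eq (k + 1) (by omega)
  have hv₂ := P.dist_eq (k + 2) (by omega)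
  have hv₄ := P.dist_eq (k + 4) (by omega)
  have hv₄t₄ : G.Adj (v (k + 4)) (t (k + 4)) :=
    P.adj_third_of_dist_ne (by omega) (by omega) (by omega)
  have hv₃t₄ : t (k + 4) ≠ v (k + 3) := (P.nbhd (k + 3) (by omega)).ne_ac.symm
  have ht₄ : t (k + 4) = t (k + 2) :=
    P.eq_third_of_adj (k := k + 1) (by omega) hv₂t₄ (ne_of_apply_ne (G.dist (v 0)) (by omega)) hv₃t₄
  obtain ⟨hl₁, ht₁t₂⟩ := P.rising_pred hconn hric (k := k) (by omega) (ht₄ ▸ hl₄) h₃.2.ge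
  obtain ⟨hl₅, ht₄t₅⟩ : G.dist (v 0) (t (k + 5)) = k + 4 ∧ G.Adj (t (k + 4)) (t (k + 5)) :=
    P.falling_succ hconn hric (k := k + 2) (by omega) (h₃.2.trans_le (by omega)) hl₄
  have hv₂t₁ : v (k + 2) ≠ t (k + 1) := (P.nbhd k (by omega)).ne_bc
  have hv₄t₅ : v (k + 4) ≠ t (k + 5) := (P.nbhd (k + 4) (by omega)).ne_ac
  have hN₄ : IsPaddedNbhd G (t (k + 4)) (v (k + 2)) (v (k + 4)) (t (k + 5)) := by
    refine .of_adj (hdeg _) hv₂t₄.symm hv₄t₄.symm ht₄t₅ ?_ ?_ hv₄t₅ <;>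
      exact ne_of_apply_ne (G.dist (v 0)) (by omega)
  obtain h | h | h := ((hN₄.adj_iff _).1 (ht₄ ▸ ht₁t₂.symm)).2
  · exact hv₂t₁ h.symm
  all_goals exact ne_of_apply_ne (G.dist (v 0)) (by omega) h

lemma adj_third_succ (hk : k + 7 ≤ l) (h₃ : IsHorizontal G v t (k + 3))
    (hl₄ : G.dist (v 0) (t (k + 4)) = k + 4) : G.Adj (t (k + 3)) (t (k + 4)) := by
  have ht₃ := h₃.2
  have hv₂ := P.dist_eq (k + 2) (by omega)
  have htrans : G.dist (t (k + 3)) (t (k + 4)) ≤ 1 ∨ G.dist (t (k + 3)) (t (k + 5)) ≤ 1 ∨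
      G.dist (v (k + 2)) (t (k + 4)) ≤ 1 :=
    P.dist_third_le_one_or_of_ne_left hconn hric (k := k + 2) (by omega) h₃.1.ne'
  have hnear : G.dist (t (k + 3)) (t (k + 4)) ≤ 1 := by
    obtain h | h | h := htrans
    · exact h
    · have hl₅ := P.le_dist_third_add_one (k := k + 5) (by omega) (by omega)
      have htri := hconn.dist_triangle (u := v 0) (v := t (k + 3)) (w := t (k + 5))
      have hnot : ¬ G.Adj (t (k + 3)) (t (k + 5)) := P.not_adj_third_add_two hconn hdeg hric
        (k := k + 2) hk h₃ (show G.dist (v 0) (t (k + 5)) = k + 4 by omega)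
      refine absurd (((dist_le_one_iff hconn).1 h).resolve_left ?_) hnot
      exact ne_of_apply_ne (G.dist (v 0)) (by omega)
    · have := hconn.dist_triangle (u := v 0) (v := v (k + 2)) (w := t (k + 4))
      omega
  exact ((dist_le_one_iff hconn).1 hnear).resolve_left (ne_of_apply_ne (G.dist (v 0)) (by omega))

lemma isHorizontal_succ (hk : k + 7 ≤ l) (h₃ : IsHorizontal G v t (k + 3)) :
    IsHorizontal G v t (k + 4) ∧ G.Adj (t (k + 3)) (t (k + 4)) := by
  have hl₄ : G.dist (v 0) (t (k + 4)) = k + 4 := by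
    have hle : G.dist (v 0) (t (k + 4)) ≤ G.dist (v 0) (t (k + 3)) + 1 :=
      P.dist_third_succ_le hconn hric (k := k + 2) (by omega)
    have hge := P.le_dist_third_add_one (k := k + 4) (by omega) (by omega)
    have hne := P.dist_third_ne_of_isHorizontal hconn hdeg hric hk h₃
    rw [h₃.2] at hle
    omega
  have ht₃t₄ := P.adj_third_succ hconn hdeg hric hk h₃ hl₄
  refine ⟨⟨P.adj_third (by omega) (by omega) fun h => ?_, hl₄⟩, ht₃t₄⟩
  have hl₃ := h₃.2
  have hv₃ := P.dist_eq (k + 3) (by omega)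
  have hv₅ := P.dist_eq (k + 5) (by omega)
  have hN₄ : IsPaddedNbhd G (v (k + 4)) (v (k + 3)) (v (k + 5)) (t (k + 4)) :=
    P.nbhd (k + 3) (by omega)
  rw [h] at ht₃t₄ hN₄
  obtain h | h | h := ((hN₄.adj_iff _).1 ht₃t₄.symm).2
  · exact h₃.1.ne' h
  · exact ne_of_apply_ne (G.dist (v 0)) (by omega) h
  · exact ht₃t₄.ne h

lemma third_add_two_eq_of_forall_dist_ne (hk : k + 5 ≤ l) (h₂ : IsHorizontal G v t (k + 2))
    (hup : ∀ s, G.Adj (t (k + 2)) s → G.dist (v 0) s ≠ k + 3) : t (k + 3) = t (k + 1) := by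
  obtain ⟨hv₂t₂, hl₂⟩ := h₂
  have hv₀ := P.dist_eq k (by omega)
  have hv₁ := P.dist_eq (k + 1) (by omega)
  have hv₃ := P.dist_eq (k + 3) (by omega)
  have hl₃ := P.le_dist_third_add_one (k := k + 3) (by omega) (by omega)
  have hl₄ := P.le_dist_third_add_one (k := k + 4) (by omega) (by omega)
  have hup' (s : V) (hs : k + 3 ≤ G.dist (v 0) s) : ¬ G.dist (t (k + 2)) s ≤ 1 := by
    intro h
    have htri := hconn.dist_triangle (u := v 0) (v := t (k + 2)) (w := s)
    refine hup s (((dist_le_one_iff hconn).1 h).resolve_left ?_) (by omega)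
    exact ne_of_apply_ne (G.dist (v 0)) (by omega)
  have htrans : G.dist (t (k + 2)) (t (k + 3)) ≤ 1 ∨ G.dist (t (k + 2)) (t (k + 4)) ≤ 1 ∨
      G.dist (v (k + 1)) (t (k + 3)) ≤ 1 :=
    P.dist_third_le_one_or_of_ne_left hconn hric (k := k + 1) hk hv₂t₂.ne'
  obtain h | h | h := htrans
  · have hl₃' : G.dist (v 0) (t (k + 3)) = k + 2 := by
      by_contra hne
      exact hup' _ (by omega) h
    have hlt : 1 < G.dist (t (k + 2)) (t (k + 3)) :=
      P.one_lt_dist_third_of_falling hconn hdeg hric (k := k + 1) hk ⟨hv₂t₂, hl₂⟩ hl₃'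
    exact absurd h hlt.not_ge
  · exact absurd h (hup' _ (by omega))
  · have hN₃ : IsPaddedNbhd G (v (k + 3)) (v (k + 2)) (v (k + 4)) (t (k + 3)) :=
      P.nbhd (k + 2) (by omega)
    refine P.eq_third_of_adj (by omega) (((dist_le_one_iff hconn).1 h).resolve_left ?_) ?_
      hN₃.ne_ac.symm <;> exact ne_of_apply_ne (G.dist (v 0)) (by omega)

lemma third_add_two_ne_of_rising (hk : k + 6 ≤ l) (h₂ : G.dist (v 0) (t (k + 2)) = k + 3)
    (h₃ : IsHorizontal G v t (k + 3)) : t (k + 4) ≠ t (k + 2) := by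
  intro heq
  have hl₃ := h₃.2
  obtain ⟨hl₁, ht₁t₂⟩ := P.rising_pred hconn hric (k := k) (by omega) h₂ hl₃.ge
  obtain ⟨hl₅, ht₄t₅⟩ : G.dist (v 0) (t (k + 5)) = k + 4 ∧ G.Adj (t (k + 4)) (t (k + 5)) :=
    P.falling_succ hconn hric (k := k + 2) hk hl₃.le (heq ▸ h₂)
  have hv₂ := P.dist_eq (k + 2) (by omega)
  have hv₄ := P.dist_eq (k + 4) (by omega)
  have hv₂t₂ : G.Adj (v (k + 2)) (t (k + 2)) :=
    P.adj_third_of_dist_ne (by omega) (by omega) (by omega)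
  have hv₄t₄ : G.Adj (v (k + 4)) (t (k + 4)) :=
    P.adj_third_of_dist_ne (by omega) (by omega) (by rw [heq]; omega)
  have hv₂t₁ : v (k + 2) ≠ t (k + 1) := (P.nbhd k (by omega)).ne_bc
  have hv₄t₅ : v (k + 4) ≠ t (k + 5) := (P.nbhd (k + 4) (by omega)).ne_ac
  rw [heq] at ht₄t₅ hv₄t₄
  have hN₂ : IsPaddedNbhd G (t (k + 2)) (v (k + 2)) (v (k + 4)) (t (k + 5)) := by
    refine .of_adj (hdeg _) hv₂t₂.symm hv₄t₄.symm ht₄t₅ ?_ ?_ hv₄t₅ <;>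
      exact ne_of_apply_ne (G.dist (v 0)) (by omega)
  obtain h | h | h := ((hN₂.adj_iff _).1 ht₁t₂.symm).2
  · exact hv₂t₁ h.symm
  all_goals exact ne_of_apply_ne (G.dist (v 0)) (by omega) h

lemma third_ne_of_isHorizontal_succ (hk : k + 7 ≤ l) (h₄ : IsHorizontal G v t (k + 4)) :
    t (k + 3) ≠ v (k + 3) := by
  intro h₃
  obtain ⟨hl₂, ht₂t₄⟩ : G.dist (v 0) (t (k + 2)) = k + 3 ∧ G.Adj (t (k + 2)) (t (k + 4)) :=
    P.adj_third_add_two_of_third_eq hconn hric (k := k + 1) (by omega) h₃ h₄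
  have hl₄ := h₄.2
  have hl₅ := P.le_dist_third_add_one (k := k + 5) (by omega) (by omega)
  have hv₂ := P.dist_eq (k + 2) (by omega)
  have hv₃ := P.dist_eq (k + 3) (by omega)
  have hv₄ := P.dist_eq (k + 4) (by omega)
  obtain ⟨hl₁, ht₁t₂⟩ := P.rising_pred hconn hric (k := k) (by omega) hl₂ (by rw [h₃, hv₃])
  have hv₂t₂ : G.Adj (v (k + 2)) (t (k + 2)) :=
    P.adj_third_of_dist_ne (by omega) (by omega) (by omega)
  have hv₂t₁ : v (k + 2) ≠ t (k + 1) := (P.nbhd k (by omega)).ne_bc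
  have hN₂ : IsPaddedNbhd G (t (k + 2)) (v (k + 2)) (t (k + 1)) (t (k + 4)) := by
    refine .of_adj (hdeg _) hv₂t₂.symm ht₁t₂.symm ht₂t₄ hv₂t₁ ?_ ?_ <;>
      exact ne_of_apply_ne (G.dist (v 0)) (by omega)
  obtain ⟨r, hN₄⟩ := IsPaddedNbhd.exists_of_adj (hdeg _) ht₂t₄.symm h₄.1.symm
    (ne_of_apply_ne (G.dist (v 0)) (by omega))
  have hr : G.dist (v 0) r ≤ k + 4 := by
    have := dist_nbhd_add_le_of_ricci_nonneg hconn (hric _ _ ht₂t₄) (v 0) hN₂ hN₄ (by omega)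
    omega
  have hup (s : V) (hs : G.Adj (t (k + 4)) s) : G.dist (v 0) s ≠ k + 5 := by
    obtain rfl | rfl | rfl := ((hN₄.adj_iff s).1 hs).2 <;> omega
  have ht₅t₃ : t (k + 5) = t (k + 3) :=
    P.third_add_two_eq_of_forall_dist_ne hconn hdeg hric (k := k + 2) hk h₄ hup
  rw [ht₅t₃, h₃] at hl₅
  omega

lemma dist_third_le_one_of_rising (hk : k + 7 ≤ l) (hl₃ : G.dist (v 0) (t (k + 3)) = k + 4)
    (h₄ : IsHorizontal G v t (k + 4)) : G.dist (t (k + 3)) (t (k + 4)) ≤ 1 := by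
  have hl₄ := h₄.2
  have hv₂ := P.dist_eq (k + 2) (by omega)
  have hv₅ := P.dist_eq (k + 5) (by omega)
  have hv₆ := P.dist_eq (k + 6) (by omega)
  obtain ⟨hl₂, ht₂t₃⟩ : G.dist (v 0) (t (k + 2)) = k + 3 ∧ G.Adj (t (k + 2)) (t (k + 3)) :=
    P.rising_pred hconn hric (k := k + 1) (by omega) hl₃ hl₄.ge
  obtain ⟨hl₁, ht₁t₂⟩ := P.rising_pred hconn hric (k := k) (by omega) hl₂ (by omega)
  have hv₂t₂ : G.Adj (v (k + 2)) (t (k + 2)) :=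
    P.adj_third_of_dist_ne (by omega) (by omega) (by omega)
  have hv₂t₁ : v (k + 2) ≠ t (k + 1) := (P.nbhd k (by omega)).ne_bc
  have hN₂ : IsPaddedNbhd G (t (k + 2)) (v (k + 2)) (t (k + 1)) (t (k + 3)) := by
    refine .of_adj (hdeg _) hv₂t₂.symm ht₁t₂.symm ht₂t₃ hv₂t₁ ?_ ?_ <;>
      exact ne_of_apply_ne (G.dist (v 0)) (by omega)
  have htrans : G.dist (t (k + 3)) (t (k + 4)) ≤ 1 ∨ G.dist (t (k + 2)) (t (k + 4)) ≤ 1 ∨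
      G.dist (t (k + 3)) (v (k + 5)) ≤ 1 :=
    P.dist_third_le_one_or_of_ne_right hconn hric (k := k + 1) (by omega) h₄.1.ne'
  obtain h | h | h := htrans
  · exact h
  · rw [hN₂.dist_le_one_iff hconn] at h
    obtain h | h | h | h := h
    · exact absurd h (ne_of_apply_ne (G.dist (v 0)) (by omega))
    · exact absurd h (ne_of_apply_ne (G.dist (v 0)) (by omega))
    · exact absurd h (ne_of_apply_ne (G.dist (v 0)) (by omega))
    · simp [h]
  · have hM₃ : IsPaddedNbhd G (v (k + 3)) (v (k + 2)) (v (k + 4)) (t (k + 3)) :=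
      P.nbhd (k + 2) (by omega)
    have hv₅t₃ : G.Adj (v (k + 5)) (t (k + 3)) := (((dist_le_one_iff hconn).1 h).resolve_left
      (ne_of_apply_ne (G.dist (v 0)) (by omega))).symm
    have hv₆t₃ : t (k + 3) ≠ v (k + 6) := ne_of_apply_ne (G.dist (v 0)) (by omega)
    have ht₃t₅ : t (k + 3) = t (k + 5) :=
      P.eq_third_of_adj (k := k + 4) (by omega) hv₅t₃ hM₃.ne_bc.symm hv₆t₃
    have hne : t (k + 5) ≠ t (k + 3) :=
      P.third_add_two_ne_of_rising hconn hdeg hric (k := k + 1) hk hl₃ h₄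
    exact absurd ht₃t₅.symm hne

lemma dist_third_ne_of_isHorizontal_succ (hk : k + 7 ≤ l) (h₄ : IsHorizontal G v t (k + 4)) :
    G.dist (v 0) (t (k + 3)) ≠ k + 4 := by
  intro hl₃
  have hl₄ := h₄.2
  have hv₃ := P.dist_eq (k + 3) (by omega)
  have hv₄ := P.dist_eq (k + 4) (by omega)
  have hnear := P.dist_third_le_one_of_rising hconn hdeg hric hk hl₃ h₄
  obtain ⟨hl₂, ht₂t₃⟩ : G.dist (v 0) (t (k + 2)) = k + 3 ∧ G.Adj (t (k + 2)) (t (k + 3)) :=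
    P.rising_pred hconn hric (k := k + 1) (by omega) hl₃ hl₄.ge
  have hv₃t₃ : G.Adj (v (k + 3)) (t (k + 3)) :=
    P.adj_third_of_dist_ne (by omega) (by omega) (by omega)
  have hM₂ : IsPaddedNbhd G (v (k + 2)) (v (k + 1)) (v (k + 3)) (t (k + 2)) :=
    P.nbhd (k + 1) (by omega)
  have hup (s : V) (hs : G.Adj (t (k + 4)) s) : G.dist (v 0) s ≠ k + 5 := by
    obtain h | h := (dist_le_one_iff hconn).1 hnear
    · have hN₃ : IsPaddedNbhd G (t (k + 3)) (v (k + 3)) (t (k + 2)) (v (k + 4)) := by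
        refine .of_adj (hdeg _) hv₃t₃.symm ht₂t₃.symm (h ▸ h₄.1.symm) hM₂.ne_bc ?_ ?_ <;>
          exact ne_of_apply_ne (G.dist (v 0)) (by omega)
      obtain rfl | rfl | rfl := ((hN₃.adj_iff s).1 (h ▸ hs)).2 <;> omega
    · have hM₃ : IsPaddedNbhd G (v (k + 3)) (v (k + 2)) (v (k + 4)) (t (k + 3)) :=
        P.nbhd (k + 2) (by omega)
      obtain ⟨q, ht₄q, hq⟩ := exists_adj_dist_eq_of_dist_eq_succ hl₄
      have hN₄ : IsPaddedNbhd G (t (k + 4)) q (v (k + 4)) (t (k + 3)) := by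
        refine .of_adj (hdeg _) ht₄q h₄.1.symm h.symm ?_ ?_ hM₃.ne_bc <;>
          exact ne_of_apply_ne (G.dist (v 0)) (by omega)
      obtain rfl | rfl | rfl := ((hN₄.adj_iff s).1 hs).2 <;> omega
  exact P.third_add_two_ne_of_rising hconn hdeg hric (k := k + 1) hk hl₃ h₄
    (P.third_add_two_eq_of_forall_dist_ne hconn hdeg hric (k := k + 2) hk h₄ hup)

lemma isHorizontal_of_succ (hk : k + 7 ≤ l) (h₄ : IsHorizontal G v t (k + 4)) :
    IsHorizontal G v t (k + 3) := by
  refine ⟨P.adj_third (by omega) (by omega)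
    (P.third_ne_of_isHorizontal_succ hconn hdeg hric hk h₄), ?_⟩
  have hle : G.dist (v 0) (t (k + 4)) ≤ G.dist (v 0) (t (k + 3)) + 1 :=
    P.dist_third_succ_le hconn hric (k := k + 2) (by omega)
  have hle' := P.dist_third_le (k := k + 3) (by omega) (by omega)
  have hne := P.dist_third_ne_of_isHorizontal_succ hconn hdeg hric hk h₄
  rw [h₄.2] at hle
  omega

lemma isHorizontal_iff_three {j : ℕ} (hj : 3 ≤ j) (hjl : j + 3 ≤ l) :
    IsHorizontal G v t j ↔ IsHorizontal G v t 3 := by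
  induction j, hj using Nat.le_induction with
  | base => rfl
  | succ j hj ih =>
    obtain ⟨k, rfl⟩ := Nat.exists_eq_add_of_le' hj
    rw [← ih (by omega)]
    exact ⟨P.isHorizontal_of_succ hconn hdeg hric hjl,
      fun h => (P.isHorizontal_succ hconn hdeg hric hjl h).1⟩

end Propagation

end IsFramedGeodesic

section Existence

variable {G : SimpleGraph V} {l : ℕ} {v : ℕ → V}

lemma dist_eq_of_adj_of_dist_eq (hconn : G.Connected) (hadj : ∀ i < l, G.Adj (v i) (v (i + 1)))
    (hgeo : G.dist (v 0) (v l) = l) (k : ℕ) (hk : k ≤ l) : G.dist (v 0) (v k) = k := by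
  have hwalk (i j : ℕ) (hij : i ≤ j) (hjl : j ≤ l) : G.dist (v i) (v j) ≤ j - i := by
    induction j, hij using Nat.le_induction with
    | base => simp
    | succ j hij ih =>
      have := dist_le_dist_add_one_of_adj (o := v i) (hadj j hjl)
      have := ih (by omega)
      omega
  have h₀ := hwalk 0 k k.zero_le hk
  have h₁ := hwalk k l hk le_rfl
  have := hconn.dist_triangle (u := v 0) (v := v k) (w := v l)
  omega

lemma exists_isFramedGeodesic [G.LocallyFinite] (hconn : G.Connected)
    (hdeg : ∀ x, G.degree x ≤ 3) (hadj : ∀ i < l, G.Adj (v i) (v (i + 1)))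
    (hgeo : G.dist (v 0) (v l) = l) : ∃ t, IsFramedGeodesic G l v t := by
  have hdist := dist_eq_of_adj_of_dist_eq hconn hadj hgeo
  have hthird (k : ℕ) (hk : k + 2 ≤ l) :
      ∃ c, IsPaddedNbhd G (v (k + 1)) (v k) (v (k + 2)) c := by
    have hv₀ := hdist k (by omega)
    have hv₂ := hdist (k + 2) hk
    exact IsPaddedNbhd.exists_of_adj (hdeg _) (hadj k (by omega)).symm (hadj (k + 1) hk)
      (ne_of_apply_ne (G.dist (v 0)) (by omega))
  have : Nonempty V := hconn.nonempty
  choose! c hc using hthird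
  exact ⟨fun k => c (k - 1), hadj, hdist, hc⟩

end Existence

theorem horizontal_neighbors_propagate_general (G : SimpleGraph V) [G.LocallyFinite]
    (hconn : G.Connected) (hdeg : ∀ x : V, G.degree x ≤ 3) (hric : NonnegRicci G)
    (l : ℕ) (v : ℕ → V) (hadj : ∀ i < l, G.Adj (v i) (v (i + 1)))
    (hgeo : G.dist (v 0) (v l) = l)
    (hex : ∃ i : ℕ, 3 ≤ i ∧ i ≤ l - 3 ∧
      ∃ u : V, G.Adj (v i) u ∧ u ≠ v (i - 1) ∧ u ≠ v (i + 1) ∧ G.dist (v 0) u = i) :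
    ∃ u : ℕ → V,
      (∀ j : ℕ, 3 ≤ j → j ≤ l - 3 →
        G.Adj (v j) (u j) ∧ u j ≠ v (j - 1) ∧ u j ≠ v (j + 1) ∧ G.dist (v 0) (u j) = j) ∧
      (∀ j : ℕ, 3 ≤ j → j ≤ l - 4 → G.Adj (u j) (u (j + 1))) := by
  obtain ⟨t, P⟩ := exists_isFramedGeodesic hconn hdeg hadj hgeo
  obtain ⟨i, hi, hil, u, hvu, hprev, hnext, hdist⟩ := hex
  have h_three : IsHorizontal G v t 3 := by
    rw [← P.isHorizontal_iff_three hconn hdeg hric hi (by omega)]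
    obtain ⟨k, rfl⟩ := Nat.exists_eq_add_one.2 (show 0 < i by omega)
    obtain rfl := P.eq_third_of_adj (by omega) hvu hprev hnext
    exact ⟨hvu, hdist⟩
  have h_all (j : ℕ) (hj : 3 ≤ j) (hjl : j + 3 ≤ l) : IsHorizontal G v t j :=
    (P.isHorizontal_iff_three hconn hdeg hric hj hjl).2 h_three
  refine ⟨t, fun j hj hjl => ?_, fun j hj hjl => ?_⟩
  · obtain ⟨hvt, ht⟩ := h_all j hj (by omega)
    obtain ⟨k, rfl⟩ := Nat.exists_eq_add_one.2 (show 0 < j by omega)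
    have hN := P.nbhd k (by omega)
    exact ⟨hvt, hN.ne_ac.symm, hN.ne_bc.symm, ht⟩
  · obtain ⟨k, rfl⟩ := Nat.exists_eq_add_of_le' hj
    exact (P.isHorizontal_succ hconn hdeg hric (by omega) (h_all _ hj (by omega))).2

/-- Let `P = v 0, …, v l` (`l ≥ 6`) be a diameter path of a connected
simple graph `G` with maximum degree at most 3 and nonnegative Ricci curvature. If for
some `i` with `3 ≤ i ≤ l − 3` the vertex `v i` has a third neighbor at distance `i` from
`v 0`, then every `v j` with `3 ≤ j ≤ l − 3` has a third neighbor `u j` at distance `j`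
from `v 0`, and `u j` is adjacent to `u (j+1)` for `3 ≤ j ≤ l − 4`. -/
theorem horizontal_neighbors_propagate (G : SimpleGraph V) [G.LocallyFinite]
    (hconn : G.Connected) (hdeg : ∀ x : V, G.degree x ≤ 3) (hric : NonnegRicci G)
    (l : ℕ) (hl : 6 ≤ l) (v : ℕ → V)
    (hadj : ∀ i < l, G.Adj (v i) (v (i + 1)))
    (hinj : ∀ i ≤ l, ∀ j ≤ l, v i = v j → i = j)
    (hgeo : G.dist (v 0) (v l) = l)
    (hdiam : ∀ x y : V, G.dist x y ≤ l)
    (hex : ∃ i : ℕ, 3 ≤ i ∧ i ≤ l - 3 ∧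
      ∃ u : V, G.Adj (v i) u ∧ u ≠ v (i - 1) ∧ u ≠ v (i + 1) ∧ G.dist (v 0) u = i) :
    ∃ u : ℕ → V,
      (∀ j : ℕ, 3 ≤ j → j ≤ l - 3 →
        G.Adj (v j) (u j) ∧ u j ≠ v (j - 1) ∧ u j ≠ v (j + 1) ∧ G.dist (v 0) (u j) = j) ∧
      (∀ j : ℕ, 3 ≤ j → j ≤ l - 4 → G.Adj (u j) (u (j + 1))) :=
  horizontal_neighbors_propagate_general G hconn hdeg hric l v hadj hgeo hex
end
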